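/- arXiv:2209.04664 — 3 statements merged into one kernel-verified Lean document; each statement's English description precedes it below -/
import Mathlib

section
/- If C is a compact subset of the Wasserstein space (P₂(ℝ^d), W₂), then the set of martingale measures D := ∪_{ν∈C} Γ(ν) is compact in (P₂(ℝ^{2d}), W₂). -/
/-!
Let `γ n` be martingale measures with second marginals `ν n` in `C`. Passing to a subsequence,
`ν n` converges to some `ν` in `C` for `W2`. The proof extracts a further subsequence of `γ n`
that converges weakly, identifies the limit as a member of `Γ(ν)`, and upgrades weak convergence
to convergence in `W2`.

* Uniform integrability. All tails are measured by the convex function `((‖x‖ - R)⁺)²`. Jensen's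
  inequality for the conditional expectation bounds the tail of the first marginal of `γ n` by
  that of `ν n` (`tailMoment_le_of_MGamma`), and the tails of `ν n` are uniformly small because
  `ν n` converges in `W2` (`exists_tailMoment_le`).
* Compactness. Bounded second moments give tightness, hence a weakly convergent subsequence by
  Prokhorov's theorem (`exists_subseq_tendsto`).
* The limit is in `Γ(ν)`. The second marginal is a weakly continuous function of the measure. The
  martingale property is equivalent to `∫ g(x) (y - x) dγ = 0` for all bounded continuous `g`
  (`martProp_test`, `martProp_of_test`), and this passes to the limit because the integrand has
  linear growth while second moments are bounded (`martProp_of_tendsto`).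
* Convergence in `W2`. Weak convergence and uniform integrability of second moments imply `W2`
  convergence (`tendsto_W2`). A partition of unity with small supports cuts both measures
  into pieces; the common mass of corresponding pieces is coupled at small cost, and the remaining
  mass tends to zero by weak convergence, so that its cost is controlled by the tails.
-/

open MeasureTheory Filter Set Matrix

noncomputable section

/-- The bilinear form of the matrix `S`: `S(x,y) = ⟨x, Sy⟩`. -/
def Sb {d : ℕ} (S : Matrix (Fin d) (Fin d) ℝ) (x y : Fin d → ℝ) : ℝ :=
  x ⬝ᵥ S.mulVec y

/-- A set `G` is `S`-monotone if `S(x-y,x-y) ≥ 0` for all `x, y ∈ G`. -/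
def SMono {d : ℕ} (S : Matrix (Fin d) (Fin d) ℝ) (G : Set (Fin d → ℝ)) : Prop :=
  ∀ x ∈ G, ∀ y ∈ G, 0 ≤ Sb S (x - y) (x - y)

/-- Maximal `S`-monotone set. -/
def MaxSMono {d : ℕ} (S : Matrix (Fin d) (Fin d) ℝ) (G : Set (Fin d → ℝ)) : Prop :=
  SMono S G ∧ ∀ H, SMono S H → G ⊆ H → H = G

/-- The Fitzpatrick function `ψ_G(y) = sup_{x∈G} (S(x,y) - S(x,x)/2)`, with values in
`ℝ ∪ {+∞}` (modeled in `EReal`). -/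
def fitz {d : ℕ} (S : Matrix (Fin d) (Fin d) ℝ) (G : Set (Fin d → ℝ))
    (y : Fin d → ℝ) : EReal :=
  ⨆ x ∈ G, ((Sb S x y - Sb S x x / 2 : ℝ) : EReal)

/-- Positive part of an extended real number, in `ℝ≥0∞`. -/
def epos (x : EReal) : ENNReal := if x = ⊤ then ⊤ else ENNReal.ofReal x.toReal

/-- Integral of an `EReal`-valued function: positive part minus negative part. -/
def eInt {α : Type*} [MeasurableSpace α] (μ : Measure α) (f : α → EReal) : EReal :=
  ((∫⁻ a, epos (f a) ∂μ : ENNReal) : EReal) - ((∫⁻ a, epos (-(f a)) ∂μ : ENNReal) : EReal)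

/-- The martingale property of a measure `γ(dx,dy)` on `ℝ^d × ℝ^d`: the conditional
expectation of `y` given `x` equals `x`, `γ`-a.s. -/
def MartProp {d : ℕ} (γ : Measure ((Fin d → ℝ) × (Fin d → ℝ))) : Prop :=
  γ[(fun p => p.2) | MeasurableSpace.comap Prod.fst inferInstance] =ᵐ[γ] fun p => p.1

/-- `γ ∈ Γ(ν)`: probability measures on `ℝ^d × ℝ^d` with finite second moment,
`y`-marginal `ν` and the martingale property. -/
def MGamma {d : ℕ} (ν : Measure (Fin d → ℝ))
    (γ : Measure ((Fin d → ℝ) × (Fin d → ℝ))) : Prop :=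
  IsProbabilityMeasure γ ∧ γ.map Prod.snd = ν ∧
    Integrable (fun p => ‖p.1‖ ^ 2 + ‖p.2‖ ^ 2) γ ∧ MartProp γ

/-- Value of the primal problem: `(1/2) ∫ S(x,y) dγ`. -/
def primalVal {d : ℕ} (S : Matrix (Fin d) (Fin d) ℝ)
    (γ : Measure ((Fin d → ℝ) × (Fin d → ℝ))) : ℝ :=
  (1 / 2) * ∫ p, Sb S p.1 p.2 ∂γ

/-- `γ` is an optimal plan for the primal problem. -/
def PrimalOpt {d : ℕ} (S : Matrix (Fin d) (Fin d) ℝ) (ν : Measure (Fin d → ℝ))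
    (γ : Measure ((Fin d → ℝ) × (Fin d → ℝ))) : Prop :=
  MGamma ν γ ∧ ∀ γ', MGamma ν γ' → primalVal S γ' ≤ primalVal S γ

/-- `G` is an optimal set for the dual problem: minimize `∫ ψ_G dν` over maximal
`S`-monotone sets. -/
def DualOpt {d : ℕ} (S : Matrix (Fin d) (Fin d) ℝ) (ν : Measure (Fin d → ℝ))
    (G : Set (Fin d → ℝ)) : Prop :=
  MaxSMono S G ∧ ∀ H, MaxSMono S H → eInt ν (fitz S G) ≤ eInt ν (fitz S H)

/-- The support of a measure: points all of whose neighborhoods have positive measure. -/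
def msupp {α : Type*} [TopologicalSpace α] [MeasurableSpace α] (μ : Measure α) : Set α :=
  {x | ∀ U ∈ nhds x, μ U ≠ 0}

/-- The `S`-projection on `G`: minimizers over `G` of `z ↦ S(z-y,z-y)`. -/
def SProj {d : ℕ} (S : Matrix (Fin d) (Fin d) ℝ) (G : Set (Fin d → ℝ))
    (y : Fin d → ℝ) : Set (Fin d → ℝ) :=
  {x ∈ G | ∀ z ∈ G, Sb S (x - y) (x - y) ≤ Sb S (z - y) (z - y)}

/-- The inverse image of the projection: `P_G^{-1}(x) = {y : x ∈ P_G(y)}`. -/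
def SProjInv {d : ℕ} (S : Matrix (Fin d) (Fin d) ℝ) (G : Set (Fin d → ℝ))
    (x : Fin d → ℝ) : Set (Fin d → ℝ) :=
  {y | x ∈ SProj S G y}

/-- `Q_G(x) = ∪_{n ≥ 1} Q_G^{1/n}(x)`, where
`Q_G^ε(x) = {y ∈ P_G^{-1}(x) : x + ε (x - y) ∈ P_G^{-1}(x)}`. -/
def QG {d : ℕ} (S : Matrix (Fin d) (Fin d) ℝ) (G : Set (Fin d → ℝ))
    (x : Fin d → ℝ) : Set (Fin d → ℝ) :=
  ⋃ n : ℕ, {y ∈ SProjInv S G x |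
    x + ((1 : ℝ) / (n + 1)) • (x - y) ∈ SProjInv S G x}


/-- The Wasserstein 2-distance between two measures. -/
def W2 {α : Type*} [MeasurableSpace α] [PseudoMetricSpace α] (μ ν : Measure α) : ℝ :=
  sInf {c : ℝ | ∃ π : Measure (α × α), IsProbabilityMeasure π ∧
    π.map Prod.fst = μ ∧ π.map Prod.snd = ν ∧
    c = Real.sqrt (∫ p, dist p.1 p.2 ^ 2 ∂π)}

/-- Membership in `P₂`: a Borel probability measure with finite second moment. -/
def FinSecondMoment {α : Type*} [MeasurableSpace α] [NormedAddCommGroup α]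
    (μ : Measure α) : Prop :=
  IsProbabilityMeasure μ ∧ Integrable (fun x => ‖x‖ ^ 2) μ

/-- Compactness (expressed sequentially, as `P₂` with `W₂` is a metric space) of a set
of measures in the Wasserstein space `(P₂, W₂)`. -/
def W2Compact {α : Type*} [MeasurableSpace α] [NormedAddCommGroup α]
    (A : Set (Measure α)) : Prop :=
  (∀ μ ∈ A, FinSecondMoment μ) ∧
    ∀ u : ℕ → Measure α, (∀ n, u n ∈ A) →
      ∃ μ ∈ A, ∃ φ : ℕ → ℕ, StrictMono φ ∧
        Tendsto (fun n => W2 (u (φ n)) μ) atTop (nhds 0)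

/-! ### Truncated second moments and couplings -/

/-- The squared excess `((‖x‖ - R)⁺)²`. It is a convex, continuous substitute for the truncated
square `‖x‖² 1_{‖x‖ > R}`, so that Jensen's inequality and lower semicontinuity apply to it;
`R = 0` gives `‖x‖²`. -/
def tailSq {E : Type*} [NormedAddCommGroup E] (R : ℝ) (x : E) : ℝ := max (‖x‖ - R) 0 ^ 2

section Tail
variable {E : Type*} [NormedAddCommGroup E]

lemma tailSq_nonneg (R : ℝ) (x : E) : 0 ≤ tailSq R x := sq_nonneg _

lemma continuous_tailSq (R : ℝ) : Continuous (tailSq R : E → ℝ) := by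
  unfold tailSq; fun_prop

lemma tailSq_zero (x : E) : tailSq 0 x = ‖x‖ ^ 2 := by
  simp [tailSq]

lemma tailSq_le_sq {R : ℝ} (hR : 0 ≤ R) (x : E) : tailSq R x ≤ ‖x‖ ^ 2 := by
  unfold tailSq
  gcongr
  exact max_le (by linarith) (norm_nonneg x)

lemma tailSq_le_dist (R : ℝ) (x y : E) :
    tailSq R x ≤ 2 * dist x y ^ 2 + 2 * tailSq R y := by
  have h : max (‖x‖ - R) 0 ≤ dist x y + max (‖y‖ - R) 0 := by
    have h1 : ‖x‖ ≤ ‖y‖ + dist x y := by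
      rw [dist_eq_norm]; linarith [norm_sub_norm_le x y]
    refine max_le ?_ (add_nonneg dist_nonneg (le_max_right _ _))
    linarith [le_max_left (‖y‖ - R) 0]
  have h0 : 0 ≤ max (‖x‖ - R) 0 := le_max_right _ _
  unfold tailSq
  nlinarith [sq_nonneg (dist x y - max (‖y‖ - R) 0)]

lemma sq_le_tailSq (R : ℝ) (x : E) : ‖x‖ ^ 2 ≤ 2 * R ^ 2 + 2 * tailSq R x := by
  have h : ‖x‖ ≤ R + max (‖x‖ - R) 0 := by linarith [le_max_left (‖x‖ - R) 0]
  unfold tailSq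
  nlinarith [norm_nonneg x, sq_nonneg (R - max (‖x‖ - R) 0)]

lemma tailSq_prod_le {F : Type*} [NormedAddCommGroup F] (R : ℝ) (p : E × F) :
    tailSq R p ≤ tailSq R p.1 + tailSq R p.2 := by
  rcases le_total ‖p.1‖ ‖p.2‖ with h | h
  · have : ‖p‖ = ‖p.2‖ := by rw [Prod.norm_def, max_eq_right h]
    have h2 : tailSq R p = tailSq R p.2 := by unfold tailSq; rw [this]
    rw [h2]; linarith [tailSq_nonneg R p.1]
  · have : ‖p‖ = ‖p.1‖ := by rw [Prod.norm_def, max_eq_left h]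
    have h2 : tailSq R p = tailSq R p.1 := by unfold tailSq; rw [this]
    rw [h2]; linarith [tailSq_nonneg R p.2]

lemma convexOn_tailSq [NormedSpace ℝ E] (R : ℝ) : ConvexOn ℝ univ (tailSq R : E → ℝ) := by
  have h : ConvexOn ℝ univ (fun x : E => max (‖x‖ - R) 0) :=
    ((convexOn_univ_norm (E := E)).sub (concaveOn_const R convex_univ)).sup
      (convexOn_const (0 : ℝ) convex_univ)
  exact h.pow (fun x _ => le_max_right _ _) 2

variable [MeasurableSpace E] [BorelSpace E]

/-- The integral of the squared excess, `∫ ((‖x‖ - R)⁺)² dμ`, with values in `[0, ∞]`. A family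
of measures has uniformly integrable second moments when this is uniformly small for large `R`;
`R = 0` gives the second moment. -/
def tailMoment (R : ℝ) (μ : Measure E) : ENNReal := ∫⁻ x, ENNReal.ofReal (tailSq R x) ∂μ

lemma measurable_tailSq (R : ℝ) : Measurable fun x : E => ENNReal.ofReal (tailSq R x) :=
  (continuous_tailSq R).measurable.ennreal_ofReal

omit [BorelSpace E] in
lemma tailMoment_zero_lt_top {μ : Measure E} (h : FinSecondMoment μ) : tailMoment 0 μ < ⊤ := by
  unfold tailMoment
  simp_rw [tailSq_zero]
  exact h.2.lintegral_lt_top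

lemma integrable_of_tailMoment {μ : Measure E} (h : tailMoment 0 μ < ⊤) :
    Integrable (fun x => ‖x‖ ^ 2) μ := by
  unfold tailMoment at h
  simp_rw [tailSq_zero] at h
  refine ⟨(by fun_prop : Continuous fun x : E => ‖x‖ ^ 2).measurable.aestronglyMeasurable, ?_⟩
  rw [hasFiniteIntegral_iff_ofReal (Eventually.of_forall fun x => sq_nonneg _)]
  exact h

lemma tendsto_tailMoment {μ : Measure E} (h : FinSecondMoment μ) :
    Tendsto (fun R : ℕ => tailMoment (R : ℝ) μ) atTop (nhds 0) := by
  have := tendsto_lintegral_of_dominated_convergence (μ := μ)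
    (F := fun (R : ℕ) (x : E) => ENNReal.ofReal (tailSq (R : ℝ) x)) (f := fun _ => 0)
    (fun x => ENNReal.ofReal (‖x‖ ^ 2)) (fun n => measurable_tailSq _)
    (fun n => Eventually.of_forall fun x =>
      ENNReal.ofReal_le_ofReal (tailSq_le_sq (Nat.cast_nonneg n) x))
    h.2.lintegral_lt_top.ne
    (Eventually.of_forall fun x => by
      refine tendsto_const_nhds.congr' ?_
      obtain ⟨N, hN⟩ := exists_nat_ge ‖x‖
      filter_upwards [eventually_ge_atTop N] with n hn
      have : ‖x‖ - n ≤ 0 := by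
        have : (N : ℝ) ≤ n := by exact_mod_cast hn
        linarith
      simp [tailSq, max_eq_right this])
  simpa [tailMoment] using this

/-- Truncated moments of the two marginals of a coupling are comparable, up to the cost of the
coupling. -/
lemma tailMoment_le_coupling [SecondCountableTopology E] {μ ν : Measure E} {π : Measure (E × E)}
    (h1 : π.map Prod.fst = μ) (h2 : π.map Prod.snd = ν) (R : ℝ) :
    tailMoment R μ ≤ 2 * ∫⁻ p, ENNReal.ofReal (dist p.1 p.2 ^ 2) ∂π + 2 * tailMoment R ν := by
  have e1 : tailMoment R μ = ∫⁻ p, ENNReal.ofReal (tailSq R p.1) ∂π := by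
    rw [← h1, tailMoment, lintegral_map (measurable_tailSq R) measurable_fst]
  have e2 : tailMoment R ν = ∫⁻ p, ENNReal.ofReal (tailSq R p.2) ∂π := by
    rw [← h2, tailMoment, lintegral_map (measurable_tailSq R) measurable_snd]
  have m1 : Measurable fun p : E × E => ENNReal.ofReal (dist p.1 p.2 ^ 2) := by fun_prop
  have m2 : Measurable fun p : E × E => ENNReal.ofReal (tailSq R p.2) :=
    (measurable_tailSq R).comp measurable_snd
  rw [e1, e2, ← lintegral_const_mul _ m1, ← lintegral_const_mul _ m2,
    ← lintegral_add_left (m1.const_mul _)]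
  refine lintegral_mono fun p => ?_
  have : (2 : ENNReal) = ENNReal.ofReal 2 := by simp
  rw [this, ← ENNReal.ofReal_mul (by norm_num), ← ENNReal.ofReal_mul (by norm_num),
    ← ENNReal.ofReal_add (by positivity) (by have := tailSq_nonneg R p.2; positivity)]
  exact ENNReal.ofReal_le_ofReal (tailSq_le_dist R p.1 p.2)

/-- Any coupling bounds `W2` from above. The cost bound is on a lower integral, which rules out the
junk value `0` of the Bochner integral of a cost that is not integrable. -/
lemma W2_le_of_coupling [SecondCountableTopology E] {μ ν : Measure E} {π : Measure (E × E)}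
    (hπ : IsProbabilityMeasure π)
    (h1 : π.map Prod.fst = μ) (h2 : π.map Prod.snd = ν) {c : ℝ} (hc : 0 ≤ c)
    (h : ∫⁻ p, ENNReal.ofReal (dist p.1 p.2 ^ 2) ∂π ≤ ENNReal.ofReal (c ^ 2)) : W2 μ ν ≤ c := by
  have hb : BddBelow {c : ℝ | ∃ π : Measure (E × E), IsProbabilityMeasure π ∧
    π.map Prod.fst = μ ∧ π.map Prod.snd = ν ∧
    c = Real.sqrt (∫ p, dist p.1 p.2 ^ 2 ∂π)} := by
    refine ⟨0, ?_⟩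
    rintro _ ⟨_, _, _, _, rfl⟩
    exact Real.sqrt_nonneg _
  refine (csInf_le hb ⟨π, hπ, h1, h2, rfl⟩).trans ?_
  rw [Real.sqrt_le_left hc]
  rw [integral_eq_lintegral_of_nonneg_ae (Eventually.of_forall fun p => sq_nonneg _)
    (by fun_prop : Measurable fun p : E × E => dist p.1 p.2 ^ 2).aestronglyMeasurable]
  exact ENNReal.toReal_le_of_le_ofReal (sq_nonneg c) h

omit [BorelSpace E] in
lemma W2_nonneg (μ ν : Measure E) : 0 ≤ W2 μ ν := by
  refine Real.sInf_nonneg ?_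
  rintro _ ⟨_, _, _, _, rfl⟩
  exact Real.sqrt_nonneg _

/-- Finite second moments make every cost integrable, so the Bochner integrals in the definition of
`W2` are the true costs. -/
lemma exists_coupling_of_W2_lt [SecondCountableTopology E] {μ ν : Measure E}
    (hμ : FinSecondMoment μ) (hν : FinSecondMoment ν) {c : ℝ} (h : W2 μ ν < c) :
    ∃ π : Measure (E × E), IsProbabilityMeasure π ∧ π.map Prod.fst = μ ∧ π.map Prod.snd = ν ∧
      ∫⁻ p, ENNReal.ofReal (dist p.1 p.2 ^ 2) ∂π ≤ ENNReal.ofReal (c ^ 2) := by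
  have := hμ.1
  have := hν.1
  obtain ⟨_, ⟨π, hπ, h1, h2, rfl⟩, hlt⟩ := exists_lt_of_csInf_lt
    (by exact ⟨_, μ.prod ν, inferInstance, by simp, by simp, rfl⟩) h
  refine ⟨π, hπ, h1, h2, ?_⟩
  have i1 : Integrable (fun p : E × E => ‖p.1‖ ^ 2) π :=
    (by rw [h1]; exact hμ.2 : Integrable (fun x : E => ‖x‖ ^ 2) (π.map Prod.fst)).comp_measurable
      measurable_fst
  have i2 : Integrable (fun p : E × E => ‖p.2‖ ^ 2) π :=
    (by rw [h2]; exact hν.2 : Integrable (fun x : E => ‖x‖ ^ 2) (π.map Prod.snd)).comp_measurable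
      measurable_snd
  have i : Integrable (fun p : E × E => dist p.1 p.2 ^ 2) π := by
    refine ((i1.const_mul 2).add (i2.const_mul 2)).mono'
      (by fun_prop : Measurable fun p : E × E => dist p.1 p.2 ^ 2).aestronglyMeasurable
      (Eventually.of_forall fun p => ?_)
    rw [Real.norm_of_nonneg (sq_nonneg _), dist_eq_norm]
    have := norm_sub_le p.1 p.2
    simp only [Pi.add_apply]
    nlinarith [sq_nonneg (‖p.1‖ - ‖p.2‖), norm_nonneg (p.1 - p.2)]
  rw [← ofReal_integral_eq_lintegral_ofReal i (Eventually.of_forall fun p => sq_nonneg _)]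
  refine ENNReal.ofReal_le_ofReal ?_
  rw [← Real.sqrt_le_left ((Real.sqrt_nonneg _).trans hlt.le)]
  exact hlt.le

end Tail

/-! ### The martingale property -/

section Mart
variable {d : ℕ}

lemma integrable_id_of_sq {E : Type*} [NormedAddCommGroup E] [MeasurableSpace E] [BorelSpace E]
    [SecondCountableTopology E] {μ : Measure E} [IsFiniteMeasure μ]
    (h : Integrable (fun x => ‖x‖ ^ 2) μ) : Integrable (fun x => x) μ := by
  refine (h.add (integrable_const (1 : ℝ))).mono' measurable_id.aestronglyMeasurable
    (Eventually.of_forall fun x => ?_)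
  simp only [Pi.add_apply]
  nlinarith [sq_nonneg (‖x‖ - 1), norm_nonneg x]

lemma finSecondMoment_of_MGamma {ν : Measure (Fin d → ℝ)}
    {γ : Measure ((Fin d → ℝ) × (Fin d → ℝ))} (h : MGamma ν γ) : FinSecondMoment γ := by
  refine ⟨h.1, h.2.2.1.mono'
    (by fun_prop : Measurable fun p : (Fin d → ℝ) × (Fin d → ℝ) => ‖p‖ ^ 2).aestronglyMeasurable
    (Eventually.of_forall fun p => ?_)⟩
  rw [Real.norm_of_nonneg (sq_nonneg _), Prod.norm_def]
  rcases le_total ‖p.1‖ ‖p.2‖ with h | h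
  · rw [max_eq_right h]; nlinarith [sq_nonneg ‖p.1‖]
  · rw [max_eq_left h]; nlinarith [sq_nonneg ‖p.2‖]

lemma comap_fst_le : MeasurableSpace.comap (Prod.fst : (Fin d → ℝ) × (Fin d → ℝ) → (Fin d → ℝ))
    inferInstance ≤ (inferInstance : MeasurableSpace ((Fin d → ℝ) × (Fin d → ℝ))) :=
  measurable_fst.comap_le

/-- Jensen's inequality for the convex function `tailSq R`, conditionally on the first coordinate:
under the martingale property the first marginal has smaller truncated moments than the second. -/
lemma tail_fst_le {ν : Measure (Fin d → ℝ)}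
    {γ : Measure ((Fin d → ℝ) × (Fin d → ℝ))} (h : MGamma ν γ) {R : ℝ} (hR : 0 ≤ R) :
    ∫⁻ p, ENNReal.ofReal (tailSq R p.1) ∂γ ≤ tailMoment R ν := by
  have hγ := finSecondMoment_of_MGamma h
  have := h.1
  obtain ⟨-, hν, -, hm⟩ := h
  have hid := integrable_id_of_sq hγ.2
  have hy : Integrable (fun p : (Fin d → ℝ) × (Fin d → ℝ) => p.2) γ := hid.snd
  have hty : Integrable (tailSq R ∘ fun p : (Fin d → ℝ) × (Fin d → ℝ) => p.2) γ := by
    refine hγ.2.mono' ((continuous_tailSq R).comp continuous_snd).measurable.aestronglyMeasurable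
      (Eventually.of_forall fun p => ?_)
    rw [Function.comp_apply, Real.norm_of_nonneg (tailSq_nonneg _ _)]
    refine (tailSq_le_sq hR _).trans ?_
    gcongr
    exact norm_snd_le p
  have hJ := (convexOn_tailSq (E := Fin d → ℝ) R).map_condExp_le_univ comap_fst_le
    (continuous_tailSq R).lowerSemicontinuous hy hty
  have hJ' : ∀ᵐ p ∂γ, tailSq R p.1 ≤ (γ[tailSq R ∘ fun p => p.2 |
      MeasurableSpace.comap Prod.fst inferInstance]) p := by
    filter_upwards [hJ, hm] with p h1 h2
    rwa [Function.comp_apply, h2] at h1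
  calc ∫⁻ p, ENNReal.ofReal (tailSq R p.1) ∂γ
      ≤ ∫⁻ p, ENNReal.ofReal ((γ[tailSq R ∘ fun p => p.2 |
        MeasurableSpace.comap Prod.fst inferInstance]) p) ∂γ :=
        lintegral_mono_ae (hJ'.mono fun p hp => ENNReal.ofReal_le_ofReal hp)
    _ = ENNReal.ofReal (∫ p, (γ[tailSq R ∘ fun p => p.2 |
        MeasurableSpace.comap Prod.fst inferInstance]) p ∂γ) :=
        (ofReal_integral_eq_lintegral_ofReal integrable_condExp
          (hJ'.mono fun p hp => (tailSq_nonneg R p.1).trans hp)).symm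
    _ = ENNReal.ofReal (∫ p, tailSq R p.2 ∂γ) := by
        rw [integral_condExp comap_fst_le]; rfl
    _ = ∫⁻ p, ENNReal.ofReal (tailSq R p.2) ∂γ :=
        ofReal_integral_eq_lintegral_ofReal hty (Eventually.of_forall fun p => tailSq_nonneg R p.2)
    _ = tailMoment R ν := by
        rw [← hν, tailMoment, lintegral_map (measurable_tailSq R) measurable_snd]

/-- Uniform integrability of the second moments of `ν` passes to every martingale measure in
`Γ(ν)`, with a bound that depends on `ν` only. -/
lemma tailMoment_le_of_MGamma {ν : Measure (Fin d → ℝ)}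
    {γ : Measure ((Fin d → ℝ) × (Fin d → ℝ))} (h : MGamma ν γ) {R : ℝ} (hR : 0 ≤ R) :
    tailMoment R γ ≤ 2 * tailMoment R ν := by
  have e2 : tailMoment R ν = ∫⁻ p, ENNReal.ofReal (tailSq R p.2) ∂γ := by
    rw [← h.2.1, tailMoment, lintegral_map (measurable_tailSq R) measurable_snd]
  rw [two_mul]
  calc tailMoment R γ ≤ ∫⁻ p, (ENNReal.ofReal (tailSq R p.1) + ENNReal.ofReal (tailSq R p.2)) ∂γ :=
        lintegral_mono fun p => (ENNReal.ofReal_le_ofReal (tailSq_prod_le R p)).trans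
          ENNReal.ofReal_add_le
    _ = ∫⁻ p, ENNReal.ofReal (tailSq R p.1) ∂γ + ∫⁻ p, ENNReal.ofReal (tailSq R p.2) ∂γ :=
        lintegral_add_left ((measurable_tailSq R).comp measurable_fst) _
    _ ≤ _ := add_le_add (tail_fst_le h hR) e2.ge

lemma integrable_diff {γ : Measure ((Fin d → ℝ) × (Fin d → ℝ))} (hγ : FinSecondMoment γ) :
    Integrable (fun p : (Fin d → ℝ) × (Fin d → ℝ) => p.2 - p.1) γ := by
  have := hγ.1
  have hid := integrable_id_of_sq hγ.2
  exact hid.snd.sub hid.fst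

lemma integrable_smul_diff {γ : Measure ((Fin d → ℝ) × (Fin d → ℝ))} (hγ : FinSecondMoment γ)
    {g : (Fin d → ℝ) → ℝ} (hg : Continuous g) {K : ℝ} (hK : ∀ x, ‖g x‖ ≤ K) :
    Integrable (fun p : (Fin d → ℝ) × (Fin d → ℝ) => g p.1 • (p.2 - p.1)) γ :=
  (integrable_diff hγ).bdd_smul K
    (hg.comp continuous_fst).measurable.aestronglyMeasurable
    (Eventually.of_forall fun p => hK p.1)

/-- The bounded test function `g` of the first coordinate can be pulled out of the conditional
expectation given that coordinate. -/
lemma condExp_smul_diff {γ : Measure ((Fin d → ℝ) × (Fin d → ℝ))} (hγ : FinSecondMoment γ)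
    {g : (Fin d → ℝ) → ℝ} (hg : Continuous g) {K : ℝ} (hK : ∀ x, ‖g x‖ ≤ K) :
    ∫ p, g p.1 • (p.2 - p.1) ∂γ = ∫ p, g p.1 • (γ[fun p => p.2 - p.1 |
      MeasurableSpace.comap Prod.fst inferInstance]) p ∂γ := by
  have := hγ.1
  rw [← integral_condExp comap_fst_le]
  refine integral_congr_ae ?_
  exact condExp_bilin_of_stronglyMeasurable_left (ContinuousLinearMap.lsmul ℝ ℝ)
    (hg.measurable.comp (comap_measurable Prod.fst)).stronglyMeasurable
    (integrable_smul_diff hγ hg hK) (integrable_diff hγ)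

lemma condExp_diff {γ : Measure ((Fin d → ℝ) × (Fin d → ℝ))} (hγ : FinSecondMoment γ) :
    γ[fun p => p.2 - p.1 | MeasurableSpace.comap Prod.fst inferInstance] =ᵐ[γ]
      fun p => (γ[fun p => p.2 | MeasurableSpace.comap Prod.fst inferInstance]) p - p.1 := by
  have := hγ.1
  have hid := integrable_id_of_sq hγ.2
  have h1 := condExp_sub hid.snd hid.fst (MeasurableSpace.comap Prod.fst inferInstance)
  have h2 : γ[fun p => p.1 | MeasurableSpace.comap Prod.fst inferInstance] = fun p => p.1 :=
    condExp_of_stronglyMeasurable comap_fst_le (comap_measurable Prod.fst).stronglyMeasurable hid.fst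
  filter_upwards [h1] with p hp
  simp only [Pi.sub_apply, h2] at hp
  exact hp

/-- The martingale property in weak form: `y - x` is orthogonal to bounded continuous functions
of `x`. -/
lemma martProp_test {γ : Measure ((Fin d → ℝ) × (Fin d → ℝ))} (hγ : FinSecondMoment γ)
    (hm : MartProp γ) {g : (Fin d → ℝ) → ℝ} (hg : Continuous g) {K : ℝ} (hK : ∀ x, ‖g x‖ ≤ K) :
    ∫ p, g p.1 • (p.2 - p.1) ∂γ = 0 := by
  rw [condExp_smul_diff hγ hg hK]
  refine integral_eq_zero_of_ae ?_
  filter_upwards [condExp_diff hγ, hm] with p h1 h2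
  simp [h1, h2]

/-- Converse of `martProp_test`. The conditional expectation of `y - x` is `H(x)`; testing against
smooth compactly supported functions already forces `H = 0` almost everywhere. -/
lemma martProp_of_test {γ : Measure ((Fin d → ℝ) × (Fin d → ℝ))} (hγ : FinSecondMoment γ)
    (h : ∀ (g : (Fin d → ℝ) → ℝ), Continuous g → ∀ K : ℝ, (∀ x, ‖g x‖ ≤ K) →
      ∫ p, g p.1 • (p.2 - p.1) ∂γ = 0) : MartProp γ := by
  have := hγ.1
  obtain ⟨H, hHm, hH⟩ := (stronglyMeasurable_condExp (μ := γ)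
    (f := fun p : (Fin d → ℝ) × (Fin d → ℝ) => p.2 - p.1)
    (m := MeasurableSpace.comap Prod.fst inferInstance)).exists_eq_measurable_comp
  have hHi : Integrable (H ∘ Prod.fst) γ := by
    rw [← hH]; exact integrable_condExp
  have hHi' : Integrable H (γ.map Prod.fst) :=
    (integrable_map_measure hHm.aestronglyMeasurable measurable_fst.aemeasurable).2 hHi
  have h0 : ∀ᵐ x ∂(γ.map Prod.fst), H x = 0 := by
    refine ae_eq_zero_of_integral_contDiff_smul_eq_zero hHi'.locallyIntegrable ?_
    intro g hg hgs
    obtain ⟨K, hK⟩ := hg.continuous.bounded_above_of_compact_support hgs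
    have hgH : AEStronglyMeasurable (fun x => g x • H x) (γ.map Prod.fst) :=
      (hg.continuous.measurable.stronglyMeasurable.smul hHm).aestronglyMeasurable
    rw [integral_map measurable_fst.aemeasurable hgH]
    rw [← h g hg.continuous K hK, condExp_smul_diff hγ hg.continuous hK, hH]
    rfl
  have h1 := ae_of_ae_map measurable_fst.aemeasurable h0
  unfold MartProp
  filter_upwards [h1, condExp_diff hγ] with p hp1 hp2
  rw [hH] at hp2
  simp only [Function.comp_apply, hp1] at hp2
  exact (sub_eq_zero.1 hp2.symm)

end Mart

/-! ### Block couplings and a criterion for Wasserstein convergence -/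

section Coupling
variable {E : Type*} [MeasurableSpace E]

/-- A measure on the product that pairs the `i`-th pieces independently: the sum over `i` of
`(μ i ⊗ ν i) / (mass of μ i)`. When `μ i` and `ν i` have the same mass for every `i`, it is a
coupling of `∑ μ i` and `∑ ν i`. A piece of mass zero has weight `0⁻¹ = ∞`, which multiplies the
zero measure and so contributes nothing. -/
def blockCoupling {ι : Type*} [Fintype ι] (μ ν : ι → Measure E) : Measure (E × E) :=
  ∑ i, (μ i univ)⁻¹ • (μ i).prod (ν i)

lemma blockCoupling_prod {ι : Type*} [Fintype ι] (μ ν : ι → Measure E)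
    [∀ i, IsFiniteMeasure (μ i)] [∀ i, IsFiniteMeasure (ν i)] (s t : Set E) :
    blockCoupling μ ν (s ×ˢ t) = ∑ i, (μ i univ)⁻¹ * (μ i s * ν i t) := by
  simp [blockCoupling, Measure.finsetSum_apply, Measure.prod_prod]

lemma blockCoupling_fst {ι : Type*} [Fintype ι] (μ ν : ι → Measure E)
    [∀ i, IsFiniteMeasure (μ i)] [∀ i, IsFiniteMeasure (ν i)]
    (h : ∀ i, μ i univ = ν i univ) : (blockCoupling μ ν).map Prod.fst = ∑ i, μ i := by
  ext s hs
  rw [Measure.map_apply measurable_fst hs, ← prod_univ, blockCoupling_prod,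
    Measure.finsetSum_apply]
  refine Finset.sum_congr rfl fun i _ => ?_
  rw [← h i]
  rcases eq_or_ne (μ i univ) 0 with h0 | h0
  · rw [measure_mono_null (subset_univ s) h0]; simp
  · rw [mul_comm (μ i s), ← mul_assoc, ENNReal.inv_mul_cancel h0 (measure_ne_top _ _), one_mul]

lemma blockCoupling_snd {ι : Type*} [Fintype ι] (μ ν : ι → Measure E)
    [∀ i, IsFiniteMeasure (μ i)] [∀ i, IsFiniteMeasure (ν i)]
    (h : ∀ i, μ i univ = ν i univ) : (blockCoupling μ ν).map Prod.snd = ∑ i, ν i := by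
  ext s hs
  rw [Measure.map_apply measurable_snd hs, ← univ_prod, blockCoupling_prod,
    Measure.finsetSum_apply]
  refine Finset.sum_congr rfl fun i _ => ?_
  rcases eq_or_ne (μ i univ) 0 with h0 | h0
  · rw [measure_mono_null (subset_univ s) ((h i).symm.trans h0)]; simp
  · rw [← mul_assoc, ENNReal.inv_mul_cancel h0 (measure_ne_top _ _), one_mul]

lemma lintegral_blockCoupling {ι : Type*} [Fintype ι] (μ ν : ι → Measure E)
    (f : E × E → ENNReal) : ∫⁻ p, f p ∂(blockCoupling μ ν)
      = ∑ i, (μ i univ)⁻¹ * ∫⁻ p, f p ∂((μ i).prod (ν i)) := by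
  simp [blockCoupling]

/-- Cost of a pair of pieces carried by a common set `U` on which `f` is at most `c`. -/
lemma block_cost_near (μ ν : Measure E) [IsFiniteMeasure μ] [IsFiniteMeasure ν]
    (h : μ univ = ν univ) {U : Set E} (hμ : μ Uᶜ = 0) (hν : ν Uᶜ = 0) {f : E × E → ENNReal}
    {c : ENNReal} (hf : ∀ x ∈ U, ∀ y ∈ U, f (x, y) ≤ c) :
    (μ univ)⁻¹ * ∫⁻ p, f p ∂(μ.prod ν) ≤ c * μ univ := by
  have hU : ∀ᵐ p ∂(μ.prod ν), f p ≤ c := by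
    have h1 : ∀ᵐ p ∂(μ.prod ν), p.1 ∈ U :=
      Measure.quasiMeasurePreserving_fst.ae (mem_ae_iff.2 hμ : ∀ᵐ x ∂μ, x ∈ U)
    have h2 : ∀ᵐ p ∂(μ.prod ν), p.2 ∈ U :=
      Measure.quasiMeasurePreserving_snd.ae (mem_ae_iff.2 hν : ∀ᵐ x ∂ν, x ∈ U)
    filter_upwards [h1, h2] with p hp1 hp2 using hf _ hp1 _ hp2
  calc (μ univ)⁻¹ * ∫⁻ p, f p ∂(μ.prod ν) ≤ (μ univ)⁻¹ * ∫⁻ _, c ∂(μ.prod ν) := by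
        exact mul_le_mul' le_rfl (lintegral_mono_ae hU)
    _ = c * μ univ * ((μ univ)⁻¹ * μ univ) := by
        rw [lintegral_const, ← univ_prod_univ, Measure.prod_prod, ← h]; ring
    _ ≤ c * μ univ * 1 := by gcongr; exact ENNReal.inv_mul_le_one _
    _ = _ := mul_one _

/-- Cost of an arbitrary pair of pieces, when `f (x, y) ≤ F x + F y`. -/
lemma block_cost_far (μ ν : Measure E) [IsFiniteMeasure μ] [IsFiniteMeasure ν]
    (h : μ univ = ν univ) {f : E × E → ENNReal} {F : E → ENNReal} (hF : Measurable F)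
    (hf : ∀ x y, f (x, y) ≤ F x + F y) :
    (μ univ)⁻¹ * ∫⁻ p, f p ∂(μ.prod ν) ≤ ∫⁻ x, F x ∂μ + ∫⁻ x, F x ∂ν := by
  have e : ∫⁻ p, (F p.1 + F p.2) ∂(μ.prod ν) = (∫⁻ x, F x ∂μ + ∫⁻ x, F x ∂ν) * μ univ := by
    have hF1 : Measurable fun p : E × E => F p.1 := hF.comp measurable_fst
    have hF2 : Measurable fun p : E × E => F p.2 := hF.comp measurable_snd
    rw [lintegral_add_left hF1]
    have e1 : ∫⁻ p, F p.1 ∂(μ.prod ν) = (∫⁻ x, F x ∂μ) * μ univ := by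
      rw [lintegral_prod _ hF1.aemeasurable]
      simp only [lintegral_const]
      rw [lintegral_mul_const _ hF, h]
    have e2 : ∫⁻ p, F p.2 ∂(μ.prod ν) = (∫⁻ x, F x ∂ν) * μ univ := by
      rw [lintegral_prod _ hF2.aemeasurable]
      simp only [lintegral_const]
    rw [e1, e2, add_mul]
  calc (μ univ)⁻¹ * ∫⁻ p, f p ∂(μ.prod ν) ≤ (μ univ)⁻¹ * ∫⁻ p, (F p.1 + F p.2) ∂(μ.prod ν) := by
        gcongr with p
        exact hf p.1 p.2
    _ = (∫⁻ x, F x ∂μ + ∫⁻ x, F x ∂ν) * ((μ univ)⁻¹ * μ univ) := by rw [e]; ring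
    _ ≤ (∫⁻ x, F x ∂μ + ∫⁻ x, F x ∂ν) * 1 := by gcongr; exact ENNReal.inv_mul_le_one _
    _ = _ := mul_one _

/-- Given a partition of unity `φ` (up to a deficit) and masses `m i` not exceeding `∫ φ i dμ`,
`μ` splits into pieces of mass `m i` carried by the supports of the `φ i` and a remainder. -/
lemma exists_blocks {ι : Type*} [Fintype ι] (μ : Measure E) [IsProbabilityMeasure μ]
    (φ : ι → E → ENNReal) (hφ : ∀ i, Measurable (φ i)) (hsum : ∀ x, ∑ i, φ i x ≤ 1)
    (m : ι → ENNReal) (hm : ∀ i, m i ≤ ∫⁻ x, φ i x ∂μ) :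
    ∃ μ' : Option ι → Measure E, (∀ i, IsFiniteMeasure (μ' i)) ∧ ∑ i, μ' i = μ ∧
      (∀ i, μ' (some i) univ = m i) ∧ μ' none univ = 1 - ∑ i, m i ∧
      (∀ i U, (∀ x, x ∉ U → φ i x = 0) → μ' (some i) Uᶜ = 0) ∧ μ' none ≤ μ := by
  have ha1 : ∀ i, ∫⁻ x, φ i x ∂μ ≤ 1 := fun i => by
    calc ∫⁻ x, φ i x ∂μ ≤ ∫⁻ _, 1 ∂μ := lintegral_mono fun x =>
          (Finset.single_le_sum (f := fun i => φ i x) (fun _ _ => zero_le) (Finset.mem_univ i)).trans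
            (hsum x)
      _ = 1 := by simp
  set a : ι → ENNReal := fun i => ∫⁻ x, φ i x ∂μ with ha
  set s : ι → ENNReal := fun i => m i / a i with hs
  have hs1 : ∀ i, s i ≤ 1 := fun i => ENNReal.div_le_of_le_mul (by rw [one_mul]; exact hm i)
  have hsa : ∀ i, s i * a i = m i := fun i => by
    rcases eq_or_ne (a i) 0 with h0 | h0
    · have : m i = 0 := le_antisymm ((hm i).trans h0.le) zero_le
      rw [h0, this, mul_zero]
    · exact ENNReal.div_mul_cancel h0 ((ha1 i).trans_lt ENNReal.one_lt_top).ne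
  set h : E → ENNReal := fun x => ∑ i, s i * φ i x with hh
  have hhm : Measurable h := Finset.measurable_sum _ fun i _ => (hφ i).const_mul _
  have hh1 : ∀ x, h x ≤ 1 := fun x => by
    refine le_trans (Finset.sum_le_sum fun i _ => ?_) (hsum x)
    calc s i * φ i x ≤ 1 * φ i x := by gcongr; exact hs1 i
      _ = φ i x := one_mul _
  let μ' : Option ι → Measure E := fun o =>
    o.elim (μ.withDensity fun x => 1 - h x) fun i => s i • μ.withDensity (φ i)
  have hsum' : ∑ i, μ' i = μ := by
    ext A hA
    rw [Measure.finsetSum_apply, Fintype.sum_option]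
    simp only [μ', Option.elim, Measure.smul_apply, smul_eq_mul, withDensity_apply _ hA]
    have : ∑ i, s i * ∫⁻ x in A, φ i x ∂μ = ∫⁻ x in A, h x ∂μ := by
      rw [hh, lintegral_finsetSum _ fun i _ => (hφ i).const_mul _]
      exact Finset.sum_congr rfl fun i _ => (lintegral_const_mul _ (hφ i)).symm
    rw [this, ← lintegral_add_right _ hhm]
    simp [tsub_add_cancel_of_le (hh1 _)]
  have hle : ∀ i, μ' i ≤ μ := fun i => by
    conv_rhs => rw [← hsum']
    exact Finset.single_le_sum (f := μ') (fun _ _ => Measure.zero_le _) (Finset.mem_univ i)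
  have hmass : ∀ i, μ' (some i) univ = m i := fun i => by
    simp [μ']
    exact hsa i
  refine ⟨μ', fun i => isFiniteMeasure_of_le μ (hle i), hsum', hmass, ?_, ?_, hle none⟩
  · have : (∑ i, μ' i) univ = 1 := by rw [hsum']; simp
    rw [Measure.finsetSum_apply, Fintype.sum_option, Finset.sum_congr rfl fun i _ => hmass i] at this
    exact ENNReal.eq_sub_of_add_eq' ENNReal.one_ne_top this
  · intro i U hU
    simp only [μ', Option.elim, Measure.smul_apply, smul_eq_mul]
    have : μ.withDensity (φ i) Uᶜ = 0 := by
      refine measure_mono_null (fun x hx => ?_)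
        (?_ : μ.withDensity (φ i) {x | φ i x = 0} = 0)
      · exact hU x hx
      · have hms : MeasurableSet {x | φ i x = 0} := hφ i (measurableSet_singleton 0)
        rw [withDensity_apply _ hms]
        exact setLIntegral_eq_zero hms fun x hx => hx
    rw [this, mul_zero]

end Coupling

section Conv
variable {E : Type*} [NormedAddCommGroup E] [MeasurableSpace E] [BorelSpace E]
  [SecondCountableTopology E]

omit [SecondCountableTopology E] in
/-- An explicit bound on the transport cost. Split `μ` and `ν` along the partition of unity `φ`, keep
the common mass `min (∫ φ i dμ) (∫ φ i dν)` in each piece and couple the pieces independently. Mass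
in a piece moves by at most `ε`; the cost of the remainder is controlled through `tailMoment R`. -/
lemma exists_coupling_le {ι : Type*} [Fintype ι] (μ ν : Measure E) [IsProbabilityMeasure μ]
    [IsProbabilityMeasure ν]
    (φ : ι → E → ENNReal) (hφ : ∀ i, Measurable (φ i)) (hsum : ∀ x, ∑ i, φ i x ≤ 1)
    (U : ι → Set E) (hU : ∀ i x, x ∉ U i → φ i x = 0) {ε : ℝ}
    (hε : ∀ i, ∀ x ∈ U i, ∀ y ∈ U i, dist x y ≤ ε) (R : ℝ) :
    ∃ π : Measure (E × E), IsProbabilityMeasure π ∧ π.map Prod.fst = μ ∧ π.map Prod.snd = ν ∧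
      ∫⁻ p, ENNReal.ofReal (dist p.1 p.2 ^ 2) ∂π ≤ ENNReal.ofReal (ε ^ 2) +
        ENNReal.ofReal (8 * R ^ 2) * (1 - ∑ i, min (∫⁻ x, φ i x ∂μ) (∫⁻ x, φ i x ∂ν)) +
        4 * (tailMoment R μ + tailMoment R ν) := by
  set m : ι → ENNReal := fun i => min (∫⁻ x, φ i x ∂μ) (∫⁻ x, φ i x ∂ν) with hm
  obtain ⟨μ', fμ, sμ, mμ, nμ, uμ, lμ⟩ := exists_blocks μ φ hφ hsum m fun i => min_le_left _ _
  obtain ⟨ν', fν, sν, mν, nν, uν, lν⟩ := exists_blocks ν φ hφ hsum m fun i => min_le_right _ _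
  have hmass : ∀ i, μ' i univ = ν' i univ := by
    rintro (_ | i)
    · rw [nμ, nν]
    · rw [mμ, mν]
  have h1 := (blockCoupling_fst μ' ν' hmass).trans sμ
  have h2 := (blockCoupling_snd μ' ν' hmass).trans sν
  have hm1 : ∑ i, m i ≤ 1 := by
    have : (∑ i, μ' i) univ = 1 := by rw [sμ]; simp
    rw [Measure.finsetSum_apply, Fintype.sum_option, Finset.sum_congr rfl fun i _ => mμ i] at this
    rw [← this]
    exact le_add_self
  refine ⟨blockCoupling μ' ν', ⟨?_⟩, h1, h2, ?_⟩
  · have : (blockCoupling μ' ν').map Prod.fst univ = 1 := by rw [h1]; simp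
    rwa [Measure.map_apply measurable_fst MeasurableSet.univ, preimage_univ] at this
  rw [lintegral_blockCoupling, Fintype.sum_option]
  have near : ∑ i, (μ' (some i) univ)⁻¹ *
      ∫⁻ p, ENNReal.ofReal (dist p.1 p.2 ^ 2) ∂((μ' (some i)).prod (ν' (some i)))
      ≤ ENNReal.ofReal (ε ^ 2) := by
    calc _ ≤ ∑ i, ENNReal.ofReal (ε ^ 2) * μ' (some i) univ := by
          refine Finset.sum_le_sum fun i _ => block_cost_near _ _ (hmass _) (uμ i (U i) (hU i))
            (uν i (U i) (hU i)) fun x hx y hy => ENNReal.ofReal_le_ofReal ?_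
          exact pow_le_pow_left₀ dist_nonneg (hε i x hx y hy) 2
      _ = ENNReal.ofReal (ε ^ 2) * ∑ i, m i := by
          rw [Finset.mul_sum]; exact Finset.sum_congr rfl fun i _ => by rw [mμ]
      _ ≤ ENNReal.ofReal (ε ^ 2) * 1 := by gcongr
      _ = _ := mul_one _
  let F : E → ENNReal := fun x => ENNReal.ofReal (4 * R ^ 2) + 4 * ENNReal.ofReal (tailSq R x)
  have hF : Measurable F := ((measurable_tailSq R).const_mul _).const_add _
  have hFint : ∀ ρ ρ' : Measure E, ρ' ≤ ρ → ρ' univ = 1 - ∑ i, m i →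
      ∫⁻ x, F x ∂ρ' ≤ ENNReal.ofReal (4 * R ^ 2) * (1 - ∑ i, m i) + 4 * tailMoment R ρ := by
    intro ρ ρ' hle hρ'
    rw [lintegral_add_left measurable_const, lintegral_const, hρ',
      lintegral_const_mul _ (measurable_tailSq R)]
    gcongr
    exact lintegral_mono' hle le_rfl
  have far := block_cost_far (μ' none) (ν' none) (hmass none) hF
    (f := fun p => ENNReal.ofReal (dist p.1 p.2 ^ 2)) (fun x y => by
      have e : ∀ z : E, F z = ENNReal.ofReal (4 * R ^ 2 + 4 * tailSq R z) := fun z => by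
        have := tailSq_nonneg R z
        rw [ENNReal.ofReal_add (by positivity) (by positivity),
          ENNReal.ofReal_mul (p := 4) (q := tailSq R z) (by norm_num)]
        simp [F]
      have hx := tailSq_nonneg R x
      have hy := tailSq_nonneg R y
      rw [e, e, ← ENNReal.ofReal_add (by positivity) (by positivity)]
      refine ENNReal.ofReal_le_ofReal ?_
      have h1 := sq_le_tailSq R x
      have h2 := sq_le_tailSq R y
      have h3 := norm_sub_le x y
      simp only [dist_eq_norm]
      nlinarith [sq_nonneg (‖x‖ - ‖y‖), norm_nonneg (x - y)])
  -- the near part costs at most `ε²` in total, the remainder at most the two integrals of `F`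
  have e8 : ENNReal.ofReal (8 * R ^ 2) = ENNReal.ofReal (4 * R ^ 2) + ENNReal.ofReal (4 * R ^ 2) := by
    rw [← ENNReal.ofReal_add (by positivity) (by positivity)]; ring_nf
  calc _ ≤ (∫⁻ x, F x ∂(μ' none) + ∫⁻ x, F x ∂(ν' none)) + ENNReal.ofReal (ε ^ 2) :=
        add_le_add far near
    _ ≤ ((ENNReal.ofReal (4 * R ^ 2) * (1 - ∑ i, m i) + 4 * tailMoment R μ) +
        (ENNReal.ofReal (4 * R ^ 2) * (1 - ∑ i, m i) + 4 * tailMoment R ν)) +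
        ENNReal.ofReal (ε ^ 2) := by
        gcongr
        · exact hFint _ _ lμ nμ
        · exact hFint _ _ lν nν
    _ = _ := by rw [e8]; ring

open scoped NNReal BoundedContinuousFunction in
omit [MeasurableSpace E] [BorelSpace E] [SecondCountableTopology E] in
/-- A finite continuous partition of unity on a compact set, subordinate to balls of diameter at most
`ε`. -/
lemma exists_partition [ProperSpace E] {K : Set E} (hK : IsCompact K) {ε : ℝ} (hε : 0 < ε) :
    ∃ (t : Set E) (_ : Fintype t) (φ : t → E →ᵇ ℝ≥0) (U : t → Set E),
      (∀ x, ∑ i, (φ i x : ENNReal) ≤ 1) ∧ (∀ x ∈ K, ∑ i, (φ i x : ENNReal) = 1) ∧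
      (∀ i x, x ∉ U i → (φ i x : ENNReal) = 0) ∧
      (∀ i, ∀ x ∈ U i, ∀ y ∈ U i, dist x y ≤ ε) := by
  obtain ⟨t, -, ht, hKt⟩ := hK.finite_cover_balls (half_pos hε)
  have := ht.fintype
  obtain ⟨f, hf⟩ := PartitionOfUnity.exists_isSubordinate hK.isClosed
    (fun i : t => Metric.ball (i : E) (ε / 2)) (fun i => Metric.isOpen_ball)
    (by rwa [← biUnion_eq_iUnion (s := t) (t := fun x _ => Metric.ball x (ε / 2))])
  have hfle : ∀ i x, f i x ≤ 1 := fun i x => f.le_one i x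
  let φ : t → E →ᵇ ℝ≥0 := fun i => BoundedContinuousFunction.mkOfBound
    ⟨fun x => (f i x).toNNReal, continuous_real_toNNReal.comp (f i).continuous⟩ 1 (fun x y => by
      have h1 := f.nonneg i x
      have h2 := f.nonneg i y
      simp only [ContinuousMap.coe_mk, NNReal.dist_eq, Real.coe_toNNReal _ h1,
        Real.coe_toNNReal _ h2]
      rw [abs_le]
      constructor <;> linarith [hfle i x, hfle i y])
  have hs : ∀ x, ∑ i, (φ i x : ENNReal) = ENNReal.ofReal (∑ᶠ i, f i x) := fun x => by
    rw [finsum_eq_sum_of_fintype, ENNReal.ofReal_sum_of_nonneg fun i _ => f.nonneg i x]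
    rfl
  refine ⟨t, this, φ, fun i => Metric.ball (i : E) (ε / 2), ?_, ?_, ?_, ?_⟩
  · intro x
    rw [hs, ← ENNReal.ofReal_one]
    exact ENNReal.ofReal_le_ofReal (f.sum_le_one x)
  · intro x hx
    rw [hs, f.sum_eq_one hx, ENNReal.ofReal_one]
  · intro i x hx
    have : f i x = 0 := by
      by_contra h
      exact hx (hf i (subset_tsupport _ h))
    change ((f i x).toNNReal : ENNReal) = 0
    simp [this]
  · intro i x hx y hy
    have := dist_triangle_right x y (i : E)
    have h1 := Metric.mem_ball.1 hx
    have h2 := Metric.mem_ball.1 hy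
    linarith

/-- Weak convergence together with uniform integrability of the second moments implies convergence
in the Wasserstein distance. -/
lemma tendsto_W2 [ProperSpace E] {μs : ℕ → ProbabilityMeasure E} {μ : ProbabilityMeasure E}
    (h : Tendsto μs atTop (nhds μ))
    (hT : ∀ η : ENNReal, 0 < η → ∃ R : ℝ, (∀ᶠ n in atTop, tailMoment R (μs n : Measure E) ≤ η) ∧
      tailMoment R (μ : Measure E) ≤ η) :
    Tendsto (fun n => W2 (μs n : Measure E) (μ : Measure E)) atTop (nhds 0) := by
  refine tendsto_order.2 ⟨fun a ha => Eventually.of_forall fun n => ha.trans_le (W2_nonneg _ _),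
    fun a ha => ?_⟩
  obtain ⟨e, he, hea⟩ := exists_between ha
  -- the budget `e²` is split as `e² / 4` for the near part, at most `e² / 2` for the mass of the
  -- remainder, and `e² / 4` for the tails
  obtain ⟨R, hR, hR'⟩ := hT (ENNReal.ofReal (e ^ 2 / 32)) (by
    rw [ENNReal.ofReal_pos]; positivity)
  set κ : ENNReal := ENNReal.ofReal (e ^ 2 / (16 * (R ^ 2 + 1))) with hκ
  have hκ0 : 0 < κ := by rw [hκ, ENNReal.ofReal_pos]; positivity
  obtain ⟨κ', hκ'0, hκ'⟩ := exists_between hκ0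
  obtain ⟨K, hK, hKμ⟩ := isTightMeasureSet_iff_exists_isCompact_measure_compl_le.1
    (isTightMeasureSet_singleton (μ := (μ : Measure E))) κ' hκ'0
  have hKμ := hKμ μ rfl
  obtain ⟨t, _, φ, U, hφ1, hφK, hφU, hU⟩ := exists_partition hK (half_pos he)
  have hφm : ∀ i, Measurable fun x => (φ i x : ENNReal) := fun i =>
    (φ i).continuous.measurable.coe_nnreal_ennreal
  have hlim : Tendsto (fun n => 1 - ∑ i, min (∫⁻ x, φ i x ∂(μs n : Measure E))
      (∫⁻ x, φ i x ∂(μ : Measure E))) atTop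
      (nhds (1 - ∑ i, min (∫⁻ x, φ i x ∂(μ : Measure E)) (∫⁻ x, φ i x ∂(μ : Measure E)))) := by
    refine ENNReal.Tendsto.sub tendsto_const_nhds (tendsto_finsetSum _ fun i _ => ?_)
      (Or.inl ENNReal.one_ne_top)
    exact (ProbabilityMeasure.tendsto_iff_forall_lintegral_tendsto.1 h (φ i)).min tendsto_const_nhds
  have hlt : 1 - ∑ i, min (∫⁻ x, φ i x ∂(μ : Measure E)) (∫⁻ x, φ i x ∂(μ : Measure E)) < κ := by
    refine lt_of_le_of_lt ?_ hκ'
    refine le_trans ?_ hKμ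
    rw [prob_compl_eq_one_sub hK.measurableSet]
    refine tsub_le_tsub_left ?_ _
    simp only [min_self]
    rw [← lintegral_finsetSum _ fun i _ => hφm i, ← lintegral_indicator_one hK.measurableSet]
    refine lintegral_mono fun x => ?_
    by_cases hx : x ∈ K
    · simp [hx, hφK x hx]
    · simp [hx]
  filter_upwards [hlim.eventually_lt_const hlt, hR] with n hn hRn
  obtain ⟨π, hπ, h1, h2, hc⟩ := exists_coupling_le (μs n : Measure E) (μ : Measure E)
    (fun i x => (φ i x : ENNReal)) hφm hφ1 U hφU hU R
  refine lt_of_le_of_lt (W2_le_of_coupling hπ h1 h2 he.le (hc.trans ?_)) hea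
  calc _ ≤ ENNReal.ofReal ((e / 2) ^ 2) + ENNReal.ofReal (8 * R ^ 2) * κ +
        4 * (ENNReal.ofReal (e ^ 2 / 32) + ENNReal.ofReal (e ^ 2 / 32)) := by gcongr
    _ = ENNReal.ofReal ((e / 2) ^ 2 + 8 * R ^ 2 * (e ^ 2 / (16 * (R ^ 2 + 1))) +
        4 * (e ^ 2 / 32 + e ^ 2 / 32)) := by
        have e4 : (4 : ENNReal) = ENNReal.ofReal 4 := by simp
        rw [hκ, e4, ← ENNReal.ofReal_mul (by positivity), ← ENNReal.ofReal_add (by positivity)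
          (by positivity), ← ENNReal.ofReal_add (by positivity) (by positivity),
          ← ENNReal.ofReal_mul (by positivity),
          ← ENNReal.ofReal_add (by positivity) (by positivity)]
    _ ≤ ENNReal.ofReal (e ^ 2) := by
        refine ENNReal.ofReal_le_ofReal ?_
        have : 8 * R ^ 2 * (e ^ 2 / (16 * (R ^ 2 + 1))) ≤ e ^ 2 / 2 := by
          rw [← mul_div_assoc, div_le_iff₀ (by positivity)]
          nlinarith [sq_nonneg e]
        nlinarith

end Conv

/-! ### Weak compactness and weak limits -/

section Weak
variable {E : Type*} [NormedAddCommGroup E] [MeasurableSpace E] [BorelSpace E]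

/-- Lower semicontinuity of the truncated moments under weak convergence. -/
lemma tailMoment_le_of_tendsto {μs : ℕ → ProbabilityMeasure E} {μ : ProbabilityMeasure E}
    (h : Tendsto μs atTop (nhds μ)) {R : ℝ} {B : ENNReal}
    (hB : ∀ᶠ n in atTop, tailMoment R (μs n : Measure E) ≤ B) :
    tailMoment R (μ : Measure E) ≤ B := by
  refine (lintegral_le_liminf_lintegral_of_forall_isOpen_measure_le_liminf_measure
    (μs := fun n => (μs n : Measure E)) (continuous_tailSq R) (tailSq_nonneg R) fun G hG =>
      ProbabilityMeasure.le_liminf_measure_open_of_tendsto h hG).trans ?_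
  exact liminf_le_of_frequently_le' hB.frequently

/-- Chebyshev's inequality for the norm. -/
lemma norm_gt_le {μ : Measure E} {B : ENNReal} (hB : tailMoment 0 μ ≤ B) {r : ℝ} (hr : 0 < r) :
    μ {x | r < ‖x‖} ≤ B / ENNReal.ofReal (r ^ 2) := by
  refine (measure_mono (fun x hx => ?_)).trans ((meas_ge_le_lintegral_div
    (measurable_tailSq 0).aemeasurable (ENNReal.ofReal_pos.2 (by positivity)).ne'
    ENNReal.ofReal_ne_top).trans (ENNReal.div_le_div_right hB _))
  refine ENNReal.ofReal_le_ofReal ?_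
  rw [tailSq_zero]
  exact pow_le_pow_left₀ hr.le (le_of_lt hx) 2

/-- Prokhorov's theorem: bounded second moments give tightness. -/
lemma exists_subseq_tendsto [ProperSpace E] [SecondCountableTopology E]
    {μs : ℕ → ProbabilityMeasure E} {B : ENNReal}
    (hB : B ≠ ⊤) (h : ∀ n, tailMoment 0 (μs n : Measure E) ≤ B) :
    ∃ (μ : ProbabilityMeasure E) (φ : ℕ → ℕ), StrictMono φ ∧
      Tendsto (fun n => μs (φ n)) atTop (nhds μ) := by
  have ht : IsTightMeasureSet {((μ : ProbabilityMeasure E) : Measure E) | μ ∈ range μs} := by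
    refine isTightMeasureSet_of_tendsto_measure_norm_gt ?_
    have hlim : Tendsto (fun r : ℝ => B / ENNReal.ofReal (r ^ 2)) atTop (nhds 0) := by
      have h1 : Tendsto (fun r : ℝ => ENNReal.ofReal (r ^ 2)) atTop (nhds ⊤) :=
        ENNReal.tendsto_ofReal_atTop.comp (tendsto_pow_atTop two_ne_zero)
      simpa using ENNReal.Tendsto.const_div (a := B) h1 (Or.inr hB)
    refine tendsto_of_tendsto_of_tendsto_of_le_of_le' tendsto_const_nhds hlim
      (Eventually.of_forall fun _ => zero_le) ?_
    filter_upwards [eventually_gt_atTop 0] with r hr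
    refine iSup₂_le ?_
    rintro _ ⟨_, ⟨n, rfl⟩, rfl⟩
    exact norm_gt_le (h n) hr
  obtain ⟨μ, -, φ, hφ, hlim⟩ := (isCompact_closure_of_isTightMeasureSet ht).tendsto_subseq
    (fun n => subset_closure (mem_range_self n))
  exact ⟨μ, φ, hφ, hlim⟩

/-- A coupling of cost at most `c²` bounds the difference of the integrals of a Lipschitz function. -/
lemma integral_dist_le {μ ν : Measure E} [SecondCountableTopology E] {π : Measure (E × E)}
    (hπ : IsProbabilityMeasure π)
    (h1 : π.map Prod.fst = μ) (h2 : π.map Prod.snd = ν) {c : ℝ} (hc : 0 < c)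
    (h : ∫⁻ p, ENNReal.ofReal (dist p.1 p.2 ^ 2) ∂π ≤ ENNReal.ofReal (c ^ 2))
    {f : E → ℝ} (hfb : ∃ C, ∀ x, ‖f x‖ ≤ C) {L : NNReal} (hf : LipschitzWith L f) :
    dist (∫ x, f x ∂μ) (∫ x, f x ∂ν) ≤ L * c := by
  obtain ⟨C, hC⟩ := hfb
  have hfm : Measurable f := hf.continuous.measurable
  have i1 : Integrable (fun p : E × E => f p.1) π :=
    Integrable.of_bound (hfm.comp measurable_fst).aestronglyMeasurable C
      (Eventually.of_forall fun p => hC p.1)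
  have i2 : Integrable (fun p : E × E => f p.2) π :=
    Integrable.of_bound (hfm.comp measurable_snd).aestronglyMeasurable C
      (Eventually.of_forall fun p => hC p.2)
  have m : Measurable fun p : E × E => dist p.1 p.2 ^ 2 := by fun_prop
  have i : Integrable (fun p : E × E => dist p.1 p.2 ^ 2) π := by
    refine ⟨m.aestronglyMeasurable, ?_⟩
    rw [hasFiniteIntegral_iff_ofReal (Eventually.of_forall fun x => sq_nonneg _)]
    exact h.trans_lt ENNReal.ofReal_lt_top
  have hi : ∫ p, dist p.1 p.2 ^ 2 ∂π ≤ c ^ 2 := by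
    rw [integral_eq_lintegral_of_nonneg_ae (Eventually.of_forall fun p => sq_nonneg _)
      m.aestronglyMeasurable]
    exact ENNReal.toReal_le_of_le_ofReal (sq_nonneg c) h
  have e1 : ∫ x, f x ∂μ = ∫ p, f p.1 ∂π := by
    rw [← h1, integral_map measurable_fst.aemeasurable hfm.aestronglyMeasurable]
  have e2 : ∫ x, f x ∂ν = ∫ p, f p.2 ∂π := by
    rw [← h2, integral_map measurable_snd.aemeasurable hfm.aestronglyMeasurable]
  rw [e1, e2, dist_eq_norm, ← integral_sub i1 i2]
  have hc' : c ≠ 0 := hc.ne'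
  -- `dist ≤ (dist² / c + c) / 2` replaces the Cauchy-Schwarz inequality
  calc ‖∫ p, (f p.1 - f p.2) ∂π‖ ≤ ∫ p, L * ((dist p.1 p.2 ^ 2 / c + c) / 2) ∂π := by
        refine norm_integral_le_of_norm_le
          ((((i.div_const c).add (integrable_const c)).div_const 2).const_mul _)
          (Eventually.of_forall fun p => ?_)
        rw [← dist_eq_norm]
        refine (hf.dist_le_mul p.1 p.2).trans ?_
        gcongr
        have : dist p.1 p.2 ^ 2 / c + c = (dist p.1 p.2 ^ 2 + c ^ 2) / c := by field_simp
        rw [this, div_div, le_div_iff₀ (by positivity)]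
        nlinarith [sq_nonneg (dist p.1 p.2 - c)]
    _ = L * (((∫ p, dist p.1 p.2 ^ 2 ∂π) / c + c) / 2) := by
        rw [integral_const_mul, integral_div, integral_add (i.div_const c) (integrable_const c),
          integral_div]
        simp
    _ ≤ L * ((c ^ 2 / c + c) / 2) := by gcongr
    _ = L * c := by field_simp; ring

/-- Vanishing of the integral of a function of linear growth is preserved by weak convergence when
the second moments are bounded, as such a function is then uniformly integrable. -/
lemma integral_eq_zero_of_tendsto {μs : ℕ → ProbabilityMeasure E} {μ : ProbabilityMeasure E}
    (h : Tendsto μs atTop (nhds μ)) {B : ENNReal} (hB : B ≠ ⊤)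
    (hBn : ∀ n, tailMoment 0 (μs n : Measure E) ≤ B) {f : E → ℝ} (hf : Continuous f) {K : ℝ}
    (hK : ∀ x, |f x| ≤ K * ‖x‖) (h0 : ∀ n, ∫ x, f x ∂(μs n : Measure E) = 0) :
    ∫ x, f x ∂(μ : Measure E) = 0 := by
  have hBμ := tailMoment_le_of_tendsto h (Eventually.of_forall hBn)
  -- truncating at level `M` changes the integral by `O(1 / M)`
  have key : ∀ M : ℝ, 0 < M → ∀ ρ : ProbabilityMeasure E, tailMoment 0 (ρ : Measure E) ≤ B →
      |∫ x, f x ∂(ρ : Measure E) - ∫ x, max (-M) (min M (f x)) ∂(ρ : Measure E)|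
        ≤ K ^ 2 * B.toReal / M := by
    intro M hM ρ hρ
    have i : Integrable (fun x => ‖x‖ ^ 2) (ρ : Measure E) :=
      integrable_of_tailMoment (hρ.trans_lt hB.lt_top)
    have hi : ∫ x, ‖x‖ ^ 2 ∂(ρ : Measure E) ≤ B.toReal := by
      rw [integral_eq_lintegral_of_nonneg_ae (Eventually.of_forall fun p => sq_nonneg _)
        i.aestronglyMeasurable]
      refine ENNReal.toReal_mono hB ?_
      simpa only [tailMoment, tailSq_zero] using hρ
    have hsq : ∀ x, f x ^ 2 ≤ K ^ 2 * ‖x‖ ^ 2 := fun x => by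
      rw [← mul_pow, ← sq_abs]
      exact pow_le_pow_left₀ (abs_nonneg _) (hK x) 2
    have i1 : Integrable f (ρ : Measure E) := by
      refine ((i.const_mul (K ^ 2)).add (integrable_const 1)).mono'
        hf.measurable.aestronglyMeasurable (Eventually.of_forall fun x => ?_)
      rw [Real.norm_eq_abs]
      simp only [Pi.add_apply]
      nlinarith [hsq x, sq_nonneg (|f x| - 1), sq_abs (f x), abs_nonneg (f x)]
    have i2 : Integrable (fun x => max (-M) (min M (f x))) (ρ : Measure E) :=
      Integrable.of_bound (by fun_prop : Continuous fun x => max (-M) (min M (f x))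
        ).measurable.aestronglyMeasurable M (Eventually.of_forall fun x => by
          rw [Real.norm_eq_abs, abs_le]
          exact ⟨le_max_left _ _, max_le (by linarith) (min_le_left _ _)⟩)
    rw [← integral_sub i1 i2]
    calc |∫ x, (f x - max (-M) (min M (f x))) ∂(ρ : Measure E)|
        ≤ ∫ x, K ^ 2 / M * ‖x‖ ^ 2 ∂(ρ : Measure E) := by
          rw [← Real.norm_eq_abs]
          refine norm_integral_le_of_norm_le (i.const_mul _) (Eventually.of_forall fun x => ?_)
          have h1 : |f x - max (-M) (min M (f x))| * M ≤ f x ^ 2 := by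
            rcases le_total M (f x) with h | h
            · rw [min_eq_left h, max_eq_right (by linarith), abs_of_nonneg (by linarith)]
              nlinarith
            · rw [min_eq_right h]
              rcases le_total (-M) (f x) with h' | h'
              · rw [max_eq_right h']; simp [sq_nonneg]
              · rw [max_eq_left h', abs_of_nonpos (by linarith)]
                nlinarith
          rw [Real.norm_eq_abs, div_mul_eq_mul_div, le_div_iff₀ hM]
          exact h1.trans (hsq x)
      _ = K ^ 2 / M * ∫ x, ‖x‖ ^ 2 ∂(ρ : Measure E) := integral_const_mul _ _
      _ ≤ K ^ 2 / M * B.toReal := by gcongr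
      _ = _ := by ring
  have lim : ∀ M : ℝ, 0 < M → |∫ x, f x ∂(μ : Measure E)| ≤ 2 * (K ^ 2 * B.toReal) / M := by
    intro M hM
    let g : BoundedContinuousFunction E ℝ := BoundedContinuousFunction.ofNormedAddCommGroup
      (fun x => max (-M) (min M (f x))) (by fun_prop) M (fun x => by
        rw [Real.norm_eq_abs, abs_le]
        exact ⟨le_max_left _ _, max_le (by linarith) (min_le_left _ _)⟩)
    have hg := (ProbabilityMeasure.tendsto_iff_forall_integral_tendsto.1 h g).abs
    have hgle : |∫ x, g x ∂(μ : Measure E)| ≤ K ^ 2 * B.toReal / M := by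
      refine le_of_tendsto hg (Eventually.of_forall fun n => ?_)
      have := key M hM (μs n) (hBn n)
      rw [h0 n, zero_sub, abs_neg] at this
      exact this
    have h1 := key M hM μ hBμ
    have h2 := abs_sub_abs_le_abs_sub (∫ x, f x ∂(μ : Measure E)) (∫ x, g x ∂(μ : Measure E))
    have h3 : 2 * (K ^ 2 * B.toReal) / M = K ^ 2 * B.toReal / M + K ^ 2 * B.toReal / M := by ring
    rw [h3]
    change |_ - ∫ x, g x ∂(μ : Measure E)| ≤ _ at h1
    linarith
  have hz : Tendsto (fun M : ℝ => 2 * (K ^ 2 * B.toReal) / M) atTop (nhds 0) :=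
    tendsto_const_nhds.div_atTop tendsto_id
  have : |∫ x, f x ∂(μ : Measure E)| ≤ 0 :=
    ge_of_tendsto hz ((eventually_gt_atTop 0).mono lim)
  exact abs_nonpos_iff.1 this

end Weak

/-! ### Consequences of Wasserstein convergence -/

section WassersteinLimit
variable {E : Type*} [NormedAddCommGroup E] [MeasurableSpace E] [BorelSpace E]
  [SecondCountableTopology E] {νs : ℕ → ProbabilityMeasure E} {ν : ProbabilityMeasure E}

lemma tailMoment_le_of_W2_lt {μ ρ : Measure E} (hμ : FinSecondMoment μ) (hρ : FinSecondMoment ρ)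
    {c : ℝ} (h : W2 μ ρ < c) (R : ℝ) :
    tailMoment R μ ≤ 2 * ENNReal.ofReal (c ^ 2) + 2 * tailMoment R ρ := by
  obtain ⟨π, -, h1, h2, hc⟩ := exists_coupling_of_W2_lt hμ hρ h
  refine (tailMoment_le_coupling h1 h2 R).trans ?_
  gcongr

lemma exists_tailMoment_bound (hs : ∀ n, FinSecondMoment (νs n : Measure E))
    (hν : FinSecondMoment (ν : Measure E))
    (h : Tendsto (fun n => W2 (νs n : Measure E) (ν : Measure E)) atTop (nhds 0)) :
    ∃ B : ENNReal, B ≠ ⊤ ∧ ∀ n, tailMoment 0 (νs n : Measure E) ≤ B := by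
  obtain ⟨c, hc⟩ := h.bddAbove_range
  refine ⟨2 * ENNReal.ofReal ((c + 1) ^ 2) + 2 * tailMoment 0 (ν : Measure E), ?_, fun n =>
    tailMoment_le_of_W2_lt (hs n) hν ((hc (mem_range_self n)).trans_lt (lt_add_one c)) 0⟩
  exact ENNReal.add_ne_top.2 ⟨ENNReal.mul_ne_top (by simp) ENNReal.ofReal_ne_top,
    ENNReal.mul_ne_top (by simp) (tailMoment_zero_lt_top hν).ne⟩

/-- A sequence converging in `W2` has uniformly integrable second moments. -/
lemma exists_tailMoment_le (hs : ∀ n, FinSecondMoment (νs n : Measure E))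
    (hν : FinSecondMoment (ν : Measure E))
    (h : Tendsto (fun n => W2 (νs n : Measure E) (ν : Measure E)) atTop (nhds 0))
    {η : ENNReal} (hη : 0 < η) :
    ∃ R : ℝ, 0 ≤ R ∧ ∀ᶠ n in atTop, tailMoment R (νs n : Measure E) ≤ η := by
  have h4 : 0 < η / 4 := ENNReal.div_pos hη.ne' (by simp)
  obtain ⟨N, hN⟩ := ((tendsto_tailMoment hν).eventually_le_const h4).exists
  have hc : Tendsto (fun c : ℝ => ENNReal.ofReal (c ^ 2)) (nhds 0) (nhds 0) := by
    have : Continuous fun c : ℝ => ENNReal.ofReal (c ^ 2) :=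
      ENNReal.continuous_ofReal.comp (continuous_pow 2)
    simpa using this.tendsto 0
  obtain ⟨c, hc0, hc⟩ := (((hc.mono_left nhdsWithin_le_nhds :
    Tendsto _ (nhdsWithin (0 : ℝ) (Ioi 0)) _).eventually_le_const h4).and
      self_mem_nhdsWithin).exists
  refine ⟨N, Nat.cast_nonneg N, ?_⟩
  filter_upwards [h.eventually_lt_const hc] with n hn
  calc _ ≤ 2 * (η / 4) + 2 * (η / 4) :=
        (tailMoment_le_of_W2_lt (hs n) hν hn N).trans (by gcongr)
    _ = 4 * (η / 4) := by ring
    _ = η := ENNReal.mul_div_cancel (by simp) (by simp)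

/-- Convergence in the Wasserstein distance implies weak convergence. -/
lemma tendsto_of_W2 (hs : ∀ n, FinSecondMoment (νs n : Measure E))
    (hν : FinSecondMoment (ν : Measure E))
    (h : Tendsto (fun n => W2 (νs n : Measure E) (ν : Measure E)) atTop (nhds 0)) :
    Tendsto νs atTop (nhds ν) := by
  refine tendsto_iff_forall_lipschitz_integral_tendsto.2 fun f ⟨C, hC⟩ ⟨L, hL⟩ => ?_
  rw [tendsto_iff_dist_tendsto_zero]
  have hb : ∃ C', ∀ x, ‖f x‖ ≤ C' := ⟨C + ‖f 0‖, fun x => by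
    have h1 := hC x 0
    rw [dist_eq_norm] at h1
    linarith [norm_sub_norm_le (f x) (f 0)]⟩
  have hlim : Tendsto (fun n : ℕ => (L : ℝ) * (W2 (νs n : Measure E) (ν : Measure E) +
      1 / ((n : ℝ) + 1))) atTop (nhds 0) := by
    simpa using (h.add tendsto_one_div_add_atTop_nhds_zero_nat).const_mul (L : ℝ)
  refine squeeze_zero (fun _ => dist_nonneg) (fun n => ?_) hlim
  have hn : 0 < 1 / ((n : ℝ) + 1) := by positivity
  obtain ⟨π, hπ, h1, h2, hc⟩ := exists_coupling_of_W2_lt (hs n) hν (lt_add_of_pos_right _ hn)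
  exact integral_dist_le hπ h1 h2 (add_pos_of_nonneg_of_pos (W2_nonneg _ _) hn) hc hb hL

end WassersteinLimit

/-! ### Weak limits of martingale measures -/

section Limit
variable {d : ℕ}

/-- The martingale property passes to weak limits under a second moment bound. -/
lemma martProp_of_tendsto {γs : ℕ → ProbabilityMeasure ((Fin d → ℝ) × (Fin d → ℝ))}
    {γ : ProbabilityMeasure ((Fin d → ℝ) × (Fin d → ℝ))} (h : Tendsto γs atTop (nhds γ))
    {B : ENNReal} (hB : B ≠ ⊤)
    (hBn : ∀ n, tailMoment 0 (γs n : Measure ((Fin d → ℝ) × (Fin d → ℝ))) ≤ B)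
    (hm : ∀ n, MartProp (γs n : Measure ((Fin d → ℝ) × (Fin d → ℝ)))) :
    MartProp (γ : Measure ((Fin d → ℝ) × (Fin d → ℝ))) := by
  have fin : ∀ ρ : ProbabilityMeasure ((Fin d → ℝ) × (Fin d → ℝ)),
      tailMoment 0 (ρ : Measure ((Fin d → ℝ) × (Fin d → ℝ))) ≤ B →
      FinSecondMoment (ρ : Measure ((Fin d → ℝ) × (Fin d → ℝ))) := fun ρ hρ =>
    ⟨inferInstance, integrable_of_tailMoment (hρ.trans_lt hB.lt_top)⟩
  have hγ := fin γ (tailMoment_le_of_tendsto h (Eventually.of_forall hBn))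
  refine martProp_of_test hγ fun g hg K hK => ?_
  have coord : ∀ ρ : ProbabilityMeasure ((Fin d → ℝ) × (Fin d → ℝ)),
      tailMoment 0 (ρ : Measure ((Fin d → ℝ) × (Fin d → ℝ))) ≤ B → ∀ i,
      (∫ p, g p.1 • (p.2 - p.1) ∂(ρ : Measure ((Fin d → ℝ) × (Fin d → ℝ)))) i =
      ∫ p, g p.1 * (p.2 i - p.1 i) ∂(ρ : Measure ((Fin d → ℝ) × (Fin d → ℝ))) := by
    intro ρ hρ i
    exact ((ContinuousLinearMap.proj (R := ℝ) (φ := fun _ : Fin d => ℝ) i).integral_comp_comm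
      (integrable_smul_diff (fin ρ hρ) hg hK)).symm
  ext i
  rw [coord γ (tailMoment_le_of_tendsto h (Eventually.of_forall hBn))]
  refine integral_eq_zero_of_tendsto h hB hBn (K := K * 2) (by fun_prop) (fun p => ?_) fun n => ?_
  · have h1 : |p.2 i| ≤ ‖p‖ := (norm_le_pi_norm p.2 i).trans (norm_snd_le p)
    have h2 : |p.1 i| ≤ ‖p‖ := (norm_le_pi_norm p.1 i).trans (norm_fst_le p)
    have h3 : |p.2 i - p.1 i| ≤ 2 * ‖p‖ := (abs_sub _ _).trans (by linarith)
    rw [abs_mul, mul_assoc]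
    exact mul_le_mul (hK p.1) h3 (abs_nonneg _) ((norm_nonneg _).trans (hK p.1))
  · rw [← coord (γs n) (hBn n), martProp_test (fin _ (hBn n)) (hm n) hg hK]
    rfl

lemma map_snd_of_tendsto {γs : ℕ → ProbabilityMeasure ((Fin d → ℝ) × (Fin d → ℝ))}
    {γ : ProbabilityMeasure ((Fin d → ℝ) × (Fin d → ℝ))} (h : Tendsto γs atTop (nhds γ))
    {νs : ℕ → ProbabilityMeasure (Fin d → ℝ)} {ν : ProbabilityMeasure (Fin d → ℝ)}
    (hν : Tendsto νs atTop (nhds ν))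
    (hm : ∀ n, (γs n : Measure ((Fin d → ℝ) × (Fin d → ℝ))).map Prod.snd = νs n) :
    (γ : Measure ((Fin d → ℝ) × (Fin d → ℝ))).map Prod.snd = ν := by
  have h1 := ProbabilityMeasure.tendsto_map_of_tendsto_of_continuous γs γ h continuous_snd
  have h2 : (fun n => (γs n).map continuous_snd.measurable.aemeasurable) = νs :=
    funext fun n => Subtype.ext (hm n)
  rw [h2] at h1
  have h3 := tendsto_nhds_unique h1 hν
  exact congrArg (fun ρ : ProbabilityMeasure (Fin d → ℝ) => (ρ : Measure (Fin d → ℝ))) h3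

end Limit


/-- Lemma 2: if `C` is a compact set in `(P₂(ℝ^d), W₂)`, then the set
of martingale measures `D = ∪_{ν ∈ C} Γ(ν)` is compact in `(P₂(ℝ^{2d}), W₂)`. -/
theorem martingale_measures_W2_compact
    (d : ℕ) (C : Set (Measure (Fin d → ℝ))) (hC : W2Compact C) :
    W2Compact {γ : Measure ((Fin d → ℝ) × (Fin d → ℝ)) | ∃ ν ∈ C, MGamma ν γ} := by
  refine ⟨fun γ ⟨ν, _, h⟩ => finSecondMoment_of_MGamma h, fun u hu => ?_⟩
  choose v hvC hv using hu
  obtain ⟨ν, hνC, φ₁, hφ₁, hlim⟩ := hC.2 v hvC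
  let νP : ProbabilityMeasure (Fin d → ℝ) := ⟨ν, (hC.1 ν hνC).1⟩
  have hν : FinSecondMoment (νP : Measure (Fin d → ℝ)) := hC.1 ν hνC
  let νs : ℕ → ProbabilityMeasure (Fin d → ℝ) := fun n => ⟨v (φ₁ n), (hC.1 _ (hvC _)).1⟩
  let γs : ℕ → ProbabilityMeasure ((Fin d → ℝ) × (Fin d → ℝ)) := fun n => ⟨u (φ₁ n), (hv _).1⟩
  have hνs : ∀ n, FinSecondMoment (νs n : Measure (Fin d → ℝ)) := fun n => hC.1 _ (hvC _)
  have hMG : ∀ n, MGamma (νs n : Measure (Fin d → ℝ))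
      (γs n : Measure ((Fin d → ℝ) × (Fin d → ℝ))) := fun n => hv _
  have hW : Tendsto (fun n => W2 (νs n : Measure (Fin d → ℝ)) (νP : Measure (Fin d → ℝ))) atTop
      (nhds 0) := hlim
  obtain ⟨B, hB, hBn⟩ := exists_tailMoment_bound hνs hν hW
  have hBγ : ∀ n, tailMoment 0 (γs n : Measure ((Fin d → ℝ) × (Fin d → ℝ))) ≤ 2 * B := fun n =>
    (tailMoment_le_of_MGamma (hMG n) le_rfl).trans (by gcongr; exact hBn n)
  have hB2 : 2 * B ≠ ⊤ := ENNReal.mul_ne_top (by simp) hB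
  obtain ⟨γ, φ₂, hφ₂, hγ⟩ := exists_subseq_tendsto hB2 hBγ
  have hγfin : Integrable (fun p => ‖p‖ ^ 2) (γ : Measure ((Fin d → ℝ) × (Fin d → ℝ))) :=
    integrable_of_tailMoment ((tailMoment_le_of_tendsto hγ
      (Eventually.of_forall fun n => hBγ (φ₂ n))).trans_lt hB2.lt_top)
  refine ⟨γ, ⟨ν, hνC, inferInstance, ?_, ?_, ?_⟩, φ₁ ∘ φ₂, hφ₁.comp hφ₂, ?_⟩
  · exact map_snd_of_tendsto (ν := νP) hγ ((tendsto_of_W2 hνs hν hW).comp hφ₂.tendsto_atTop)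
      fun n => (hMG (φ₂ n)).2.1
  · refine (hγfin.const_mul 2).mono' (by fun_prop : Measurable
      fun p : (Fin d → ℝ) × (Fin d → ℝ) => ‖p.1‖ ^ 2 + ‖p.2‖ ^ 2).aestronglyMeasurable
      (Eventually.of_forall fun p => ?_)
    rw [Real.norm_of_nonneg (by positivity)]
    have h1 := pow_le_pow_left₀ (norm_nonneg _) (norm_fst_le p) 2
    have h2 := pow_le_pow_left₀ (norm_nonneg _) (norm_snd_le p) 2
    linarith
  · exact martProp_of_tendsto hγ hB2 (fun n => hBγ (φ₂ n)) fun n => (hMG (φ₂ n)).2.2.2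
  · refine tendsto_W2 (μs := fun n => γs (φ₂ n)) hγ fun η hη => ?_
    obtain ⟨R, hR, hRn⟩ := exists_tailMoment_le hνs hν hW (ENNReal.half_pos hη.ne')
    have hRγ : ∀ᶠ n in atTop,
        tailMoment R (γs (φ₂ n) : Measure ((Fin d → ℝ) × (Fin d → ℝ))) ≤ η := by
      filter_upwards [hφ₂.tendsto_atTop.eventually hRn] with n hn
      calc _ ≤ 2 * (η / 2) := (tailMoment_le_of_MGamma (hMG (φ₂ n)) hR).trans (by gcongr)
        _ = η := ENNReal.mul_div_cancel (by simp) (by simp)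
    exact ⟨R, hRγ, tailMoment_le_of_tendsto hγ hRγ⟩

end
end

section
/- Let S be a real symmetric d×d matrix of full rank with exactly m positive eigenvalues, ν a Borel probability measure on ℝ^d with finite second moment, and let γ be an optimal plan for the primal problem (maximize ½∫S(x,y) dγ over Γ(ν)). Then for every Borel probability measure η on ℝ^{2d} with finite second moments whose support is contained in the support of γ, one has ∫(S(x,y) − ½S(x,x)) dη ≥ ½ S(b, b), where b := ∫ y dη is the y-barycenter of η. -/
/-!
Optimality of `γ` is tested against the following perturbations. Let `w ≥ 0` be a bounded density
with `∫ w dγ = 1` and `w y` bounded, and let `b = ∫ w y dγ`. Take the mass `ε w γ` out of `γ` and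
give it the single first coordinate `b`; on the remaining mass `(1 - ε w) γ` restore the martingale
property by moving `x` to `X = (x - ε g) / (1 - ε f)`, where `f = γ[w | x]` and `g = γ[w y | x]`.
The `y`-marginal is untouched, so this is again an element of `Γ(ν)` (`glue_mgamma`). Its value
involves `ε S(b, b)` and the integral of `S(X, x - ε g)`, which up to `O(ε²)` is that of
`S(x, x) + ε (f S(x, x) - 2 S(x, g))` (`expansion_bound`). Letting `ε → 0` gives the claim for
`η = w γ` (`variation`).

For a general `η`, write `Φ(x, y) = (S(x, y) - S(x, x) / 2, y)`. The set `K` of the integrals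
`∫ w Φ dγ` over densities `w` as above is convex, and its closure contains `Φ(z)` for each `z` in
the support of `γ`, as a limit of averages over small balls around `z` (`phi_mem_closure`). Hence
`∫ Φ dη ∈ closure K`. By `variation`, `K` lies in `{(t, b) | S(b, b) / 2 ≤ t}`, which is closed.
-/

open MeasureTheory Filter Set Matrix

noncomputable section

/-! ### Integrability and conditional expectation -/

/-- The bilinear form `Sb S` as a bundled continuous bilinear map. -/
def bil {d : ℕ} (S : Matrix (Fin d) (Fin d) ℝ) :
    (Fin d → ℝ) →L[ℝ] (Fin d → ℝ) →L[ℝ] ℝ :=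
  (Matrix.toLinearMap₂' ℝ S).toContinuousBilinearMap

lemma bil_apply {d : ℕ} (S : Matrix (Fin d) (Fin d) ℝ) (x y : Fin d → ℝ) :
    bil S x y = Sb S x y := by
  simp [bil, Sb, Matrix.toLinearMap₂'_apply']

lemma bil_symm {d : ℕ} {S : Matrix (Fin d) (Fin d) ℝ} (hS : S.IsHermitian)
    (x y : Fin d → ℝ) : bil S x y = bil S y x := by
  have hT : Sᵀ = S := by rw [← Matrix.conjTranspose_eq_transpose_of_trivial]; exact hS
  rw [bil_apply, bil_apply, Sb, Sb, Matrix.dotProduct_mulVec, dotProduct_comm,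
    ← Matrix.mulVec_transpose, hT]

/-- Quadratic growth suffices for integrability against a measure with finite second moments. -/
lemma integrable_of_quadratic {d : ℕ} {γ : Measure ((Fin d → ℝ) × (Fin d → ℝ))}
    [IsProbabilityMeasure γ]
    (h2 : Integrable (fun p => ‖p.1‖ ^ 2 + ‖p.2‖ ^ 2) γ)
    {G : Type*} [NormedAddCommGroup G] {F : (Fin d → ℝ) × (Fin d → ℝ) → G}
    (hF : AEStronglyMeasurable F γ) (K : ℝ)
    (hb : ∀ᵐ p ∂γ, ‖F p‖ ≤ K * (1 + (‖p.1‖ ^ 2 + ‖p.2‖ ^ 2))) : Integrable F γ :=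
  (((integrable_const (1 : ℝ)).add h2).const_mul K).mono' hF hb

/-- Under a bilinear pairing with an `m`-measurable `k`, `φ` may be replaced by its conditional
expectation: pull-out and tower property combined. -/
lemma integral_pullout {Ω : Type*} {m m0 : MeasurableSpace Ω} (hm : m ≤ m0) {μ : Measure Ω}
    [IsFiniteMeasure μ]
    {E F G : Type*} [NormedAddCommGroup E] [NormedSpace ℝ E] [CompleteSpace E]
    [NormedAddCommGroup F] [NormedSpace ℝ F] [NormedAddCommGroup G] [NormedSpace ℝ G]
    [CompleteSpace G] (B : F →L[ℝ] E →L[ℝ] G) {k : Ω → F} {φ ψ : Ω → E}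
    (hk : StronglyMeasurable[m] k) (hkφ : Integrable (fun ω => B (k ω) (φ ω)) μ)
    (hφ : Integrable φ μ) (hψ : μ[φ | m] =ᵐ[μ] ψ) :
    ∫ ω, B (k ω) (φ ω) ∂μ = ∫ ω, B (k ω) (ψ ω) ∂μ := by
  rw [← integral_condExp hm]
  refine integral_congr_ae ?_
  filter_upwards [condExp_bilin_of_stronglyMeasurable_left B hk hkφ hφ, hψ] with ω h1 h2
  rw [h1, h2]

/-! ### The perturbed plan -/

/-- The σ-algebra generated by the first coordinate `x`. -/
abbrev firstAlg (d : ℕ) : MeasurableSpace ((Fin d → ℝ) × (Fin d → ℝ)) :=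
  MeasurableSpace.comap Prod.fst inferInstance

/-- The perturbed plan: the mass `ε w γ` is taken out of `γ` and all its first coordinates are
moved to the single point `b`; on the remaining mass `(1 - ε w) γ` the first coordinate is
replaced by `X`. With `0 ≤ ε w ≤ 1` the `y`-marginal is not affected. -/
def glue {d : ℕ} (γ : Measure ((Fin d → ℝ) × (Fin d → ℝ)))
    (w : (Fin d → ℝ) × (Fin d → ℝ) → ℝ) (ε : ℝ)
    (X : (Fin d → ℝ) × (Fin d → ℝ) → (Fin d → ℝ)) (b : Fin d → ℝ) :
    Measure ((Fin d → ℝ) × (Fin d → ℝ)) :=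
  (γ.withDensity (fun p => ENNReal.ofReal (1 - ε * w p))).map (fun p => (X p, p.2)) +
    (γ.withDensity (fun p => ENNReal.ofReal (ε * w p))).map (fun p => (b, p.2))

/-- Integration against the image under `T` of the measure with density `ρ`. -/
lemma integral_map_withDensity {α β G : Type*} [MeasurableSpace α] [MeasurableSpace β]
    [NormedAddCommGroup G] [NormedSpace ℝ G] {γ : Measure α}
    {ρ : α → ℝ} (hρ : Measurable ρ) (h0 : ∀ p, 0 ≤ ρ p) {T : α → β} (hT : Measurable T)
    {F : β → G} (hF : StronglyMeasurable F)
    (hi : Integrable (fun p => ρ p • F (T p)) γ) :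
    Integrable F ((γ.withDensity (fun p => ENNReal.ofReal (ρ p))).map T) ∧
    ∫ q, F q ∂((γ.withDensity (fun p => ENNReal.ofReal (ρ p))).map T) =
      ∫ p, ρ p • F (T p) ∂γ := by
  have hρ' : Measurable (fun p => (ρ p).toNNReal) := hρ.real_toNNReal
  have e : (fun p => ENNReal.ofReal (ρ p)) = fun p => (((ρ p).toNNReal : NNReal) : ENNReal) := rfl
  constructor
  · rw [integrable_map_measure hF.aestronglyMeasurable hT.aemeasurable, e,
      integrable_withDensity_iff_integrable_coe_smul hρ']
    simpa [Real.coe_toNNReal _ (h0 _)] using hi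
  · rw [integral_map hT.aemeasurable hF.aestronglyMeasurable, e,
      integral_withDensity_eq_integral_smul hρ']
    simp [NNReal.smul_def, Real.coe_toNNReal _ (h0 _)]

lemma integral_glue {d : ℕ} {γ : Measure ((Fin d → ℝ) × (Fin d → ℝ))}
    {w : (Fin d → ℝ) × (Fin d → ℝ) → ℝ} {ε : ℝ}
    {X : (Fin d → ℝ) × (Fin d → ℝ) → (Fin d → ℝ)} (b : Fin d → ℝ)
    (hw : Measurable w) (h0 : ∀ p, 0 ≤ ε * w p) (h1 : ∀ p, ε * w p ≤ 1) (hX : Measurable X)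
    {G : Type*} [NormedAddCommGroup G] [NormedSpace ℝ G]
    {F : (Fin d → ℝ) × (Fin d → ℝ) → G} (hF : StronglyMeasurable F)
    (hi1 : Integrable (fun p => (1 - ε * w p) • F (X p, p.2)) γ)
    (hi2 : Integrable (fun p => (ε * w p) • F (b, p.2)) γ) :
    Integrable F (glue γ w ε X b) ∧
    ∫ q, F q ∂(glue γ w ε X b) =
      ∫ p, (1 - ε * w p) • F (X p, p.2) ∂γ + ∫ p, (ε * w p) • F (b, p.2) ∂γ := by
  obtain ⟨a1, a2⟩ := integral_map_withDensity (ρ := fun p => 1 - ε * w p) (by fun_prop)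
    (fun p => by linarith [h1 p]) (T := fun p => (X p, p.2)) (by fun_prop) hF hi1
  obtain ⟨b1, b2⟩ := integral_map_withDensity (ρ := fun p => ε * w p) (by fun_prop)
    h0 (T := fun p => (b, p.2)) (by fun_prop) hF hi2
  refine ⟨a1.add_measure b1, ?_⟩
  rw [glue, integral_add_measure a1 b1, a2, b2]

lemma glue_map_snd {d : ℕ} {γ : Measure ((Fin d → ℝ) × (Fin d → ℝ))}
    {w : (Fin d → ℝ) × (Fin d → ℝ) → ℝ} {ε : ℝ}
    {X : (Fin d → ℝ) × (Fin d → ℝ) → (Fin d → ℝ)} (b : Fin d → ℝ)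
    (hw : Measurable w) (h0 : ∀ p, 0 ≤ ε * w p) (h1 : ∀ p, ε * w p ≤ 1) (hX : Measurable X) :
    (glue γ w ε X b).map Prod.snd = γ.map Prod.snd := by
  rw [glue, Measure.map_add _ _ measurable_snd, Measure.map_map measurable_snd (by fun_prop),
    Measure.map_map measurable_snd (by fun_prop)]
  have e1 : (Prod.snd ∘ fun p : (Fin d → ℝ) × (Fin d → ℝ) => (X p, p.2)) = Prod.snd := rfl
  have e2 : (Prod.snd ∘ fun p : (Fin d → ℝ) × (Fin d → ℝ) => (b, p.2)) = Prod.snd := rfl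
  rw [e1, e2, ← Measure.map_add _ _ measurable_snd, ← withDensity_add_left (by fun_prop)]
  congr 1
  have : ((fun p => ENNReal.ofReal (1 - ε * w p)) + fun p => ENNReal.ofReal (ε * w p)) = 1 := by
    ext p
    simp only [Pi.add_apply, Pi.one_apply]
    rw [← ENNReal.ofReal_add (by linarith [h1 p]) (h0 p)]
    simp
  rw [this, withDensity_one]

/-- The perturbed plan is admissible once `X` is (a version of) the conditional `y`-barycenter of
the remaining mass `(1 - ε w) γ` given the old first coordinate, and `b` is the `y`-barycenter of
`w γ`. As `f` and `g` are only determined a.e., so is `X`. -/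
lemma glue_mgamma {d : ℕ} {ν : Measure (Fin d → ℝ)}
    {γ : Measure ((Fin d → ℝ) × (Fin d → ℝ))} (hγ : MGamma ν γ)
    {w : (Fin d → ℝ) × (Fin d → ℝ) → ℝ} {ε C K : ℝ}
    {X f : (Fin d → ℝ) × (Fin d → ℝ) → _} {g : (Fin d → ℝ) × (Fin d → ℝ) → (Fin d → ℝ)}
    (hw : Measurable w) (h0 : ∀ p, 0 ≤ ε * w p) (h1 : ∀ p, ε * w p ≤ 1)
    (hwC : ∀ p, ‖w p‖ ≤ C) (hwy : ∀ p, ‖w p • p.2‖ ≤ C) (hw1 : ∫ p, w p ∂γ = 1)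
    (hX : StronglyMeasurable[firstAlg d] X)
    (hXK : ∀ᵐ p ∂γ, ‖X p‖ ≤ K * (1 + ‖p.1‖))
    (hf : γ[w | firstAlg d] =ᵐ[γ] f)
    (hg : γ[fun p => w p • p.2 | firstAlg d] =ᵐ[γ] g)
    (hXe : ∀ᵐ p ∂γ, (1 - ε * f p) • X p = p.1 - ε • g p) :
    MGamma ν (glue γ w ε X (∫ p, w p • p.2 ∂γ)) := by
  obtain ⟨hP, hs, h2, hmart⟩ := hγ
  have hm : firstAlg d ≤ Prod.instMeasurableSpace := measurable_fst.comap_le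
  have hXm : Measurable X := (hX.mono hm).measurable
  set b := ∫ p, w p • p.2 ∂γ with hb
  have hsnd := glue_map_snd (γ := γ) b hw h0 h1 hXm
  have hwi : Integrable w γ := Integrable.of_bound hw.aestronglyMeasurable C (ae_of_all _ hwC)
  have hwyi : Integrable (fun p => w p • p.2) γ :=
    Integrable.of_bound (by fun_prop) C (ae_of_all _ hwy)
  have hprob : IsProbabilityMeasure (glue γ w ε X b) := by
    constructor
    have := congrArg (fun μ => μ univ) hsnd
    simpa [Measure.map_apply measurable_snd] using this
  have habs : ∀ p, |1 - ε * w p| ≤ 1 := fun p => by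
    rw [abs_le]; constructor <;> linarith [h0 p, h1 p]
  have hC0 : 0 ≤ C := (norm_nonneg _).trans (hwC 0)
  have hmom : Integrable (fun p => ‖p.1‖ ^ 2 + ‖p.2‖ ^ 2) (glue γ w ε X b) := by
    refine (integral_glue b hw h0 h1 hXm
      (F := fun p => ‖p.1‖ ^ 2 + ‖p.2‖ ^ 2) (by fun_prop) ?_ ?_).1
    · refine integrable_of_quadratic h2 (by fun_prop) (2 * K ^ 2 + 1) ?_
      filter_upwards [hXK] with p hp
      rw [norm_smul, Real.norm_eq_abs, Real.norm_eq_abs, abs_of_nonneg (a := _ + _) (by positivity)]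
      have := pow_le_pow_left₀ (norm_nonneg _) hp 2
      have hq : ‖X p‖ ^ 2 + ‖p.2‖ ^ 2 ≤ (2 * K ^ 2 + 1) * (1 + (‖p.1‖ ^ 2 + ‖p.2‖ ^ 2)) := by
        have : (K * (1 + ‖p.1‖)) ^ 2 ≤ 2 * K ^ 2 * (1 + ‖p.1‖ ^ 2) := by
          nlinarith [mul_nonneg (sq_nonneg K) (sq_nonneg (1 - ‖p.1‖))]
        nlinarith [mul_nonneg (sq_nonneg K) (sq_nonneg (‖p.2‖)), sq_nonneg ‖p.1‖, sq_nonneg ‖p.2‖]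
      exact (mul_le_of_le_one_left (by positivity) (habs p)).trans hq
    · refine integrable_of_quadratic h2 (by fun_prop) (‖b‖ ^ 2 + 1) (ae_of_all _ fun p => ?_)
      rw [norm_smul, Real.norm_eq_abs, Real.norm_eq_abs, abs_of_nonneg (a := _ + _) (by positivity),
        abs_of_nonneg (h0 p)]
      refine (mul_le_of_le_one_left (by positivity) (h1 p)).trans ?_
      nlinarith [sq_nonneg ‖p.1‖, sq_nonneg ‖p.2‖, sq_nonneg ‖b‖,
        mul_nonneg (sq_nonneg ‖b‖) (sq_nonneg ‖p.1‖), mul_nonneg (sq_nonneg ‖b‖) (sq_nonneg ‖p.2‖)]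
  refine ⟨hprob, hsnd.trans hs, hmom, ?_⟩
  have hi1 : Integrable (fun p => p.1) (glue γ w ε X b) :=
    integrable_of_quadratic hmom (by fun_prop) 1 (ae_of_all _ fun p => by
      nlinarith [sq_nonneg (‖p.1‖ - 1), sq_nonneg ‖p.2‖])
  have hi2 : Integrable (fun p => p.2) (glue γ w ε X b) :=
    integrable_of_quadratic hmom (by fun_prop) 1 (ae_of_all _ fun p => by
      nlinarith [sq_nonneg (‖p.2‖ - 1), sq_nonneg ‖p.1‖])
  -- martingale property: `∫ χ(x) (x - y) = 0` under the perturbed plan for each indicator `χ`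
  refine (ae_eq_condExp_of_forall_setIntegral_eq hm hi2 (fun s _ _ => hi1.integrableOn) ?_
    (Measurable.stronglyMeasurable (comap_measurable _)).aestronglyMeasurable).symm
  rintro s ⟨A, hA, rfl⟩ -
  have hsA : MeasurableSet ((Prod.fst : (Fin d → ℝ) × (Fin d → ℝ) → _) ⁻¹' A) :=
    measurable_fst hA
  rw [← sub_eq_zero, ← integral_sub hi1.integrableOn hi2.integrableOn, ← integral_indicator hsA]
  set χ : (Fin d → ℝ) → ℝ := A.indicator 1 with hχ
  have hχm : Measurable χ := measurable_one.indicator hA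
  have hχ1 : ∀ x, ‖χ x‖ ≤ 1 := fun x => by
    rw [hχ]; exact (norm_indicator_le_norm_self _ _).trans (by simp)
  have hind : ((Prod.fst : (Fin d → ℝ) × (Fin d → ℝ) → _) ⁻¹' A).indicator
      (fun p => p.1 - p.2) = fun p => χ p.1 • (p.1 - p.2) := by
    ext1 p
    by_cases hp : p.1 ∈ A <;> simp [hχ, hp, Set.indicator]
  rw [hind]
  have hx : Integrable (fun p => p.1) γ :=
    integrable_of_quadratic h2 (by fun_prop) 1 (ae_of_all _ fun p => by
      nlinarith [sq_nonneg (‖p.1‖ - 1), sq_nonneg ‖p.2‖])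
  have hy : Integrable (fun p => p.2) γ :=
    integrable_of_quadratic h2 (by fun_prop) 1 (ae_of_all _ fun p => by
      nlinarith [sq_nonneg (‖p.2‖ - 1), sq_nonneg ‖p.1‖])
  have hXi : Integrable X γ :=
    ((((integrable_const (1 : ℝ)).add hx.norm).const_mul K)).mono' hXm.aestronglyMeasurable hXK
  have hχX : ∀ {V : (Fin d → ℝ) × (Fin d → ℝ) → Fin d → ℝ}, Integrable V γ →
      Integrable (fun p => χ (X p) • V p) γ := fun hV =>
    hV.bdd_smul 1 (hχm.comp hXm).aestronglyMeasurable (ae_of_all _ fun p => hχ1 _)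
  have hwX : Integrable (fun p => w p • X p) γ :=
    hXi.bdd_smul C hw.aestronglyMeasurable (ae_of_all _ hwC)
  have i1 := hχX hXi
  have i2 := hχX hwX
  have i3 := hχX hy
  have i4 := hχX hwyi
  have e1 : (fun p => (1 - ε * w p) • (fun q : (Fin d → ℝ) × (Fin d → ℝ) =>
      χ q.1 • (q.1 - q.2)) (X p, p.2)) = fun p => (χ (X p) • X p - ε • (χ (X p) • (w p • X p))) -
        (χ (X p) • p.2 - ε • (χ (X p) • (w p • p.2))) := by
    ext1 p; module
  have e2 : (fun p => (ε * w p) • (fun q : (Fin d → ℝ) × (Fin d → ℝ) =>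
      χ q.1 • (q.1 - q.2)) (b, p.2)) = fun p => (ε * χ b) • (w p • b - w p • p.2) := by
    ext1 p; module
  have j2 : Integrable (fun p => w p • b - w p • p.2) γ := (hwi.smul_const b).sub hwyi
  have s2 : Integrable (fun p => ε • (χ (X p) • (w p • X p))) γ := i2.smul ε
  have s4 : Integrable (fun p => ε • (χ (X p) • (w p • p.2))) γ := i4.smul ε
  have d1 : Integrable (fun p => χ (X p) • X p - ε • (χ (X p) • (w p • X p))) γ := i1.sub s2
  have d2 : Integrable (fun p => χ (X p) • p.2 - ε • (χ (X p) • (w p • p.2))) γ := i3.sub s4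
  rw [(integral_glue b hw h0 h1 hXm (F := fun q : (Fin d → ℝ) × (Fin d → ℝ) =>
      χ q.1 • (q.1 - q.2)) (by
        have := hχm.comp (Measurable.fst measurable_id : Measurable fun q : (Fin d → ℝ) × (Fin d → ℝ) => q.1)
        exact (this.smul (measurable_fst.sub measurable_snd)).stronglyMeasurable)
      (by rw [e1]; exact d1.sub d2)
      (by rw [e2]; exact j2.smul (ε * χ b))).2, e1, e2]
  -- the part at `b` contributes `0` because `b = ∫ w y` and `∫ w = 1`
  rw [integral_smul, integral_sub (hwi.smul_const b) hwyi, integral_smul_const, hw1, one_smul,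
    ← hb, sub_self, smul_zero, add_zero]
  rw [integral_sub d1 d2, integral_sub i1 s2, integral_sub i3 s4,
    integral_smul, integral_smul]
  -- conditioning on the old `x` turns `y`, `w`, `w y` into `x`, `f`, `g`; then `hXe` applies
  have hχXm : StronglyMeasurable[firstAlg d]
      (fun p => χ (X p)) := (hχm.comp hX.measurable).stronglyMeasurable
  have p3 := integral_pullout hm (.lsmul ℝ ℝ) hχXm i3 hy hmart
  have p4 := integral_pullout hm (.lsmul ℝ ℝ) hχXm i4 hwyi hg
  have i2' : Integrable (fun p => w p • (χ (X p) • X p)) γ := by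
    refine i2.congr (ae_of_all _ fun p => ?_); module
  have p2 := integral_pullout hm (ContinuousLinearMap.lsmul ℝ ℝ).flip
    (hχXm.smul hX) i2' hwi hf
  have q4 : Integrable (fun p => χ (X p) • g p) γ := hχX ((integrable_condExp).congr hg)
  have q2 : Integrable (fun p => f p • (χ (X p) • X p)) γ :=
    (integrable_condExp.congr (condExp_bilin_of_stronglyMeasurable_left
      (ContinuousLinearMap.lsmul ℝ ℝ).flip (hχXm.smul hX) i2' hwi)).congr
      (by filter_upwards [hf] with p hp; simp [hp]; module)
  simp only [ContinuousLinearMap.lsmul_apply, ContinuousLinearMap.flip_apply, Pi.smul_apply'] at p2 p3 p4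
  have p2' : ∫ p, χ (X p) • (w p • X p) ∂γ = ∫ p, f p • (χ (X p) • X p) ∂γ := by
    rw [← p2]; refine integral_congr_ae (ae_of_all _ fun p => ?_); simp only; module
  have t2 : Integrable (fun p => ε • (f p • (χ (X p) • X p))) γ := q2.smul ε
  have t4 : Integrable (fun p => ε • (χ (X p) • g p)) γ := q4.smul ε
  rw [p2', p3, p4, ← integral_smul, ← integral_smul, ← integral_sub i1 t2,
    ← integral_sub (hχX hx) t4, sub_eq_zero]
  refine integral_congr_ae ?_
  filter_upwards [hXe] with p hp
  have : χ (X p) • ((1 - ε * f p) • X p) = χ (X p) • (p.1 - ε • g p) := by rw [hp]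
  convert this using 1 <;> module

/-! ### First-order expansion -/

/-- A lower bound for the perturbed integrand `B(X, u - εg) = B(u - εg, u - εg) / (1 - εf)`, where
`u` plays the role of `x`: up to second order in `ε` it equals `B(u,u) + ε (f B(u,u) - 2 B(u,g))`.
The remainder is exactly `ε² B(g - fu, g - fu) / (1 - εf)`. -/
lemma expansion_bound {E : Type*} [NormedAddCommGroup E] [NormedSpace ℝ E]
    (B : E →L[ℝ] E →L[ℝ] ℝ) (hB : ∀ x y, B x y = B y x) {u g X : E} {f ε C : ℝ}
    (hf : |f| ≤ C) (hg : ‖g‖ ≤ C) (hε : 0 ≤ ε) (hεC : ε * C ≤ 1 / 2)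
    (hX : (1 - ε * f) • X = u - ε • g) :
    B u u + ε * (f * B u u) - ε * (2 * B u g) - ε ^ 2 * (4 * ‖B‖ * C ^ 2 * (1 + ‖u‖ ^ 2)) ≤
      B X (u - ε • g) := by
  have hf' := abs_le.1 hf
  have ha : 1 / 2 ≤ 1 - ε * f := by nlinarith
  have ha0 : 0 < 1 - ε * f := by linarith
  have key : (1 - ε * f) * B X (u - ε • g) = (1 - ε * f) *
      (B u u + ε * (f * B u u) - ε * (2 * B u g)) + ε ^ 2 * B (g - f • u) (g - f • u) := by
    have : (1 - ε * f) * B X (u - ε • g) = B ((1 - ε * f) • X) (u - ε • g) := by simp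
    rw [this, hX]
    simp only [map_sub, map_smul, _root_.sub_apply, _root_.smul_apply,
      smul_eq_mul, hB g u]
    ring
  have hn : ‖g - f • u‖ ≤ C * (1 + ‖u‖) := by
    refine (norm_sub_le _ _).trans ?_
    rw [norm_smul, Real.norm_eq_abs]
    nlinarith [norm_nonneg u]
  have hR : |B (g - f • u) (g - f • u)| ≤ 2 * ‖B‖ * C ^ 2 * (1 + ‖u‖ ^ 2) := by
    have h1 := B.le_opNorm₂ (g - f • u) (g - f • u)
    rw [Real.norm_eq_abs] at h1
    refine h1.trans ?_
    have h2 : ‖g - f • u‖ ^ 2 ≤ (C * (1 + ‖u‖)) ^ 2 := pow_le_pow_left₀ (norm_nonneg _) hn 2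
    have h3 : (C * (1 + ‖u‖)) ^ 2 ≤ 2 * C ^ 2 * (1 + ‖u‖ ^ 2) := by
      nlinarith [mul_nonneg (sq_nonneg C) (sq_nonneg (1 - ‖u‖))]
    nlinarith [mul_le_mul_of_nonneg_left (h2.trans h3) (norm_nonneg B)]
  have hR' := (abs_le.1 hR).1
  set R := B (g - f • u) (g - f • u)
  set N := ‖B‖ * C ^ 2 * (1 + ‖u‖ ^ 2) with hN
  have hN0 : 0 ≤ N := by positivity
  have : 0 ≤ (1 - ε * f) * (B X (u - ε • g) -
      (B u u + ε * (f * B u u) - ε * (2 * B u g) - ε ^ 2 * (4 * N))) := by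
    have : (1 - ε * f) * (B X (u - ε • g) -
      (B u u + ε * (f * B u u) - ε * (2 * B u g) - ε ^ 2 * (4 * N))) =
        ε ^ 2 * (R + (1 - ε * f) * (4 * N)) := by linear_combination key
    rw [this]
    have : 0 ≤ R + (1 - ε * f) * (4 * N) := by nlinarith
    positivity
  have := nonneg_of_mul_nonneg_right this ha0
  rw [hN] at this
  linarith

/-- The first-order condition for `η = w γ` with `w` and `w y` bounded. -/
lemma variation {d : ℕ} {S : Matrix (Fin d) (Fin d) ℝ} (hS : S.IsHermitian)
    {ν : Measure (Fin d → ℝ)}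
    {γ : Measure ((Fin d → ℝ) × (Fin d → ℝ))} (hγ : PrimalOpt S ν γ)
    {w : (Fin d → ℝ) × (Fin d → ℝ) → ℝ} {C : ℝ}
    (hw : Measurable w) (hw0 : ∀ p, 0 ≤ w p)
    (hwC : ∀ p, w p ≤ C) (hwy : ∀ p, ‖w p • p.2‖ ≤ C) (hw1 : ∫ p, w p ∂γ = 1) :
    (1 / 2) * Sb S (∫ p, w p • p.2 ∂γ) (∫ p, w p • p.2 ∂γ) ≤
      ∫ p, w p • (Sb S p.1 p.2 - Sb S p.1 p.1 / 2) ∂γ := by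
  obtain ⟨hG, hopt⟩ := hγ
  have hG' := hG
  obtain ⟨hP, hs, h2, hmart⟩ := hG'
  have hm : firstAlg d ≤ Prod.instMeasurableSpace := measurable_fst.comap_le
  have hC0 : 0 ≤ C := (hw0 0).trans (hwC 0)
  have hwC' : ∀ p, ‖w p‖ ≤ C := fun p => by
    rw [Real.norm_eq_abs, abs_of_nonneg (hw0 p)]; exact hwC p
  have hwi : Integrable w γ := Integrable.of_bound hw.aestronglyMeasurable C (ae_of_all _ hwC')
  have hwyi : Integrable (fun p => w p • p.2) γ :=
    Integrable.of_bound (by fun_prop) C (ae_of_all _ hwy)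
  -- only these two properties of `bil S` are used; hiding its definition keeps unification cheap
  obtain ⟨B, hBS, hB⟩ : ∃ B : (Fin d → ℝ) →L[ℝ] (Fin d → ℝ) →L[ℝ] ℝ,
      (∀ x y, B x y = Sb S x y) ∧ ∀ x y, B x y = B y x := ⟨bil S, bil_apply S, bil_symm hS⟩
  set b := ∫ p, w p • p.2 ∂γ with hb
  set f := γ[w | firstAlg d] with hf
  set g := γ[fun p => w p • p.2 | firstAlg d] with hg
  have hfC : ∀ᵐ p ∂γ, ‖f p‖ ≤ C := ae_bdd_norm_condExp_of_ae_bdd_norm (ae_of_all _ hwC')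
  have hgC : ∀ᵐ p ∂γ, ‖g p‖ ≤ C := ae_bdd_norm_condExp_of_ae_bdd_norm (ae_of_all _ hwy)
  have hfm : StronglyMeasurable[firstAlg d] f := stronglyMeasurable_condExp
  have hgm : StronglyMeasurable[firstAlg d] g := stronglyMeasurable_condExp
  have hxm : StronglyMeasurable[firstAlg d] (fun p : (Fin d → ℝ) × (Fin d → ℝ) => p.1) :=
    Measurable.stronglyMeasurable (comap_measurable _)
  have hfM : Measurable f := (hfm.mono hm).measurable
  have hgM : Measurable g := (hgm.mono hm).measurable
  have hy : Integrable (fun p => p.2) γ :=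
    integrable_of_quadratic h2 (by fun_prop) 1 (ae_of_all _ fun p => by
      nlinarith [sq_nonneg (‖p.2‖ - 1), sq_nonneg ‖p.1‖])
  have hBm : ∀ {U V : (Fin d → ℝ) × (Fin d → ℝ) → Fin d → ℝ}, Measurable U → Measurable V →
      Measurable fun p => B (U p) (V p) := fun hU hV =>
    (B.continuous₂.measurable).comp (hU.prodMk hV)
  have hBint : ∀ {U V : (Fin d → ℝ) × (Fin d → ℝ) → Fin d → ℝ} (K : ℝ), Measurable U →
      Measurable V → (∀ᵐ p ∂γ, ‖U p‖ ≤ K * (1 + ‖p.1‖ + ‖p.2‖)) →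
      (∀ᵐ p ∂γ, ‖V p‖ ≤ K * (1 + ‖p.1‖ + ‖p.2‖)) → Integrable (fun p => B (U p) (V p)) γ := by
    intro U V K hU hV h1 h2'
    refine integrable_of_quadratic h2 (hBm hU hV).aestronglyMeasurable (‖B‖ * (3 * K ^ 2)) ?_
    filter_upwards [h1, h2'] with p hp hq
    refine (B.le_opNorm₂ _ _).trans ?_
    have e1 : ‖U p‖ * ‖V p‖ ≤ (K * (1 + ‖p.1‖ + ‖p.2‖)) * (K * (1 + ‖p.1‖ + ‖p.2‖)) :=
      mul_le_mul hp hq (norm_nonneg _) ((norm_nonneg _).trans hp)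
    have e2 : (1 + ‖p.1‖ + ‖p.2‖) ^ 2 ≤ 3 * (1 + (‖p.1‖ ^ 2 + ‖p.2‖ ^ 2)) := by
      nlinarith [sq_nonneg (1 - ‖p.1‖), sq_nonneg (1 - ‖p.2‖), sq_nonneg (‖p.1‖ - ‖p.2‖)]
    have e3 : ‖U p‖ * ‖V p‖ ≤ 3 * K ^ 2 * (1 + (‖p.1‖ ^ 2 + ‖p.2‖ ^ 2)) := by
      nlinarith [mul_le_mul_of_nonneg_left e2 (sq_nonneg K)]
    nlinarith [mul_le_mul_of_nonneg_left e3 (norm_nonneg B)]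
  -- growth bounds with the common constant `2 + 2 C`
  have gx : ∀ᵐ p ∂γ, ‖p.1‖ ≤ (2 + 2 * C) * (1 + ‖p.1‖ + ‖p.2‖) := ae_of_all _ fun p => by
    nlinarith [norm_nonneg p.1, norm_nonneg p.2, mul_nonneg hC0 (norm_nonneg p.1),
      mul_nonneg hC0 (norm_nonneg p.2)]
  have gy : ∀ᵐ p ∂γ, ‖p.2‖ ≤ (2 + 2 * C) * (1 + ‖p.1‖ + ‖p.2‖) := ae_of_all _ fun p => by
    nlinarith [norm_nonneg p.1, norm_nonneg p.2, mul_nonneg hC0 (norm_nonneg p.1),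
      mul_nonneg hC0 (norm_nonneg p.2)]
  have gC : ∀ {V : (Fin d → ℝ) × (Fin d → ℝ) → Fin d → ℝ}, (∀ᵐ p ∂γ, ‖V p‖ ≤ C) →
      ∀ᵐ p ∂γ, ‖V p‖ ≤ (2 + 2 * C) * (1 + ‖p.1‖ + ‖p.2‖) := by
    intro V hV
    filter_upwards [hV] with p hp
    nlinarith [norm_nonneg p.1, norm_nonneg p.2, mul_nonneg hC0 (norm_nonneg p.1),
      mul_nonneg hC0 (norm_nonneg p.2)]
  have gwx : ∀ᵐ p ∂γ, ‖w p • p.1‖ ≤ (2 + 2 * C) * (1 + ‖p.1‖ + ‖p.2‖) := ae_of_all _ fun p => by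
    rw [norm_smul]
    nlinarith [norm_nonneg p.1, norm_nonneg p.2, mul_nonneg hC0 (norm_nonneg p.1),
      mul_nonneg hC0 (norm_nonneg p.2), mul_le_mul_of_nonneg_right (hwC' p) (norm_nonneg p.1)]
  have gfx : ∀ᵐ p ∂γ, ‖f p • p.1‖ ≤ (2 + 2 * C) * (1 + ‖p.1‖ + ‖p.2‖) := by
    filter_upwards [hfC] with p hp
    rw [norm_smul]
    nlinarith [norm_nonneg p.1, norm_nonneg p.2, mul_nonneg hC0 (norm_nonneg p.1),
      mul_nonneg hC0 (norm_nonneg p.2), mul_le_mul_of_nonneg_right hp (norm_nonneg p.1)]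
  have Ixy := hBint _ measurable_fst measurable_snd gx gy
  have Ixx := hBint _ measurable_fst measurable_fst gx gx
  have Ixwy := hBint _ measurable_fst (hw.smul measurable_snd) gx (gC (ae_of_all _ hwy))
  have Ixg := hBint _ measurable_fst hgM gx (gC hgC)
  have Ixwx := hBint _ measurable_fst (hw.smul measurable_fst) gx gwx
  have Ixfx := hBint _ measurable_fst (hfM.smul measurable_fst) gx gfx
  have e3 : ∀ (c : ℝ) (x y : Fin d → ℝ), B x (c • y) = c * B x y := fun c x y => by simp
  simp only [Pi.smul_apply', e3] at Ixwy Ixwx Ixfx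
  -- the conditional expectations integrate like the original functions
  have Exx : ∫ p, B p.1 p.2 ∂γ = ∫ p, B p.1 p.1 ∂γ := integral_pullout hm B hxm Ixy hy hmart
  have Exg : ∫ p, w p * B p.1 p.2 ∂γ = ∫ p, B p.1 (g p) ∂γ := by
    rw [← integral_pullout hm B hxm (by simpa using Ixwy) hwyi ae_eq_rfl]
    simp
  have Exf : ∫ p, w p * B p.1 p.1 ∂γ = ∫ p, f p * B p.1 p.1 ∂γ := by
    have hk : StronglyMeasurable[firstAlg d] (fun p : (Fin d → ℝ) × (Fin d → ℝ) => B p.1 p.1) :=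
      B.continuous₂.comp_stronglyMeasurable (hxm.prodMk hxm)
    have := integral_pullout hm (ContinuousLinearMap.lsmul ℝ ℝ) hk
      (φ := w) (ψ := f) (by simpa [mul_comm] using Ixwx) hwi ae_eq_rfl
    simpa [mul_comm] using this
  -- the inequality obtained from the perturbation of size `ε`
  set L := ∫ p, w p * B p.1 p.1 ∂γ - 2 * ∫ p, w p * B p.1 p.2 ∂γ with hL
  set R := ∫ p, 4 * ‖B‖ * C ^ 2 * (1 + ‖p.1‖ ^ 2) ∂γ with hR
  have IR : Integrable (fun p => 4 * ‖B‖ * C ^ 2 * (1 + ‖p.1‖ ^ 2)) γ :=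
    integrable_of_quadratic h2 (by fun_prop) (4 * ‖B‖ * C ^ 2) (ae_of_all _ fun p => by
      rw [Real.norm_of_nonneg (by positivity)]
      gcongr
      linarith [sq_nonneg ‖p.2‖])
  have step : ∀ ε : ℝ, 0 < ε → ε * C ≤ 1 / 2 → L + B b b ≤ ε * R := by
    intro ε hε hεC
    have h0 : ∀ p, 0 ≤ ε * w p := fun p => mul_nonneg hε.le (hw0 p)
    have h1 : ∀ p, ε * w p ≤ 1 := fun p => by
      nlinarith [mul_le_mul_of_nonneg_left (hwC p) hε.le]
    set X : (Fin d → ℝ) × (Fin d → ℝ) → (Fin d → ℝ) :=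
      fun p => (1 - ε * f p)⁻¹ • (p.1 - ε • g p) with hXdef
    have hfε : ∀ᵐ p ∂γ, 1 / 2 ≤ 1 - ε * f p := by
      filter_upwards [hfC] with p hp
      have := (abs_le.1 hp).2
      nlinarith
    have hXe : ∀ᵐ p ∂γ, (1 - ε * f p) • X p = p.1 - ε • g p := by
      filter_upwards [hfε] with p hp
      rw [hXdef]; exact smul_inv_smul₀ (by linarith) _
    have hXs : StronglyMeasurable[firstAlg d] X := by
      have : Measurable[firstAlg d] fun p => (1 - ε * f p)⁻¹ :=
        (measurable_const.sub (hfm.measurable.const_mul ε)).inv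
      exact this.stronglyMeasurable.smul (hxm.sub (hgm.const_smul ε))
    have hXm : Measurable X := (hXs.mono hm).measurable
    have hXK : ∀ᵐ p ∂γ, ‖X p‖ ≤ 2 * (1 + ‖p.1‖) := by
      filter_upwards [hfε, hgC] with p hp hq
      rw [hXdef, norm_smul, norm_inv, Real.norm_of_nonneg (by linarith)]
      have e1 : (1 - ε * f p)⁻¹ ≤ 2 := by
        rw [inv_le_comm₀ (by linarith) two_pos]; linarith
      have e2 : ‖p.1 - ε • g p‖ ≤ 1 + ‖p.1‖ := by
        refine (norm_sub_le _ _).trans ?_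
        rw [norm_smul, Real.norm_of_nonneg hε.le]
        nlinarith [mul_le_mul_of_nonneg_left hq hε.le]
      exact mul_le_mul e1 e2 (norm_nonneg _) two_pos.le
    have gX : ∀ᵐ p ∂γ, ‖X p‖ ≤ (2 + 2 * C) * (1 + ‖p.1‖ + ‖p.2‖) := by
      filter_upwards [hXK] with p hp
      nlinarith [norm_nonneg p.1, norm_nonneg p.2, mul_nonneg hC0 (norm_nonneg p.1),
        mul_nonneg hC0 (norm_nonneg p.2)]
    have hle := hopt _ (glue_mgamma hG hw h0 h1 hwC' hwy hw1 hXs hXK ae_eq_rfl ae_eq_rfl hXe)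
    have IXy := hBint _ hXm measurable_snd gX gy
    have IXwy : Integrable (fun p => B (X p) (w p • p.2)) γ :=
      hBint _ hXm (hw.smul measurable_snd) gX (gC (ae_of_all _ hwy))
    have IXx := hBint _ hXm measurable_fst gX gx
    have IXg := hBint _ hXm hgM gX (gC hgC)
    have Ibwy := B b |>.integrable_comp hwyi
    have e1 : (fun p => (1 - ε * w p) • (fun q : (Fin d → ℝ) × (Fin d → ℝ) =>
        B q.1 q.2) (X p, p.2)) = fun p => B (X p) p.2 - ε * B (X p) (w p • p.2) := by
      ext p; simp; ring
    have e2 : (fun p => (ε * w p) • (fun q : (Fin d → ℝ) × (Fin d → ℝ) =>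
        B q.1 q.2) (b, p.2)) = fun p => ε * B b (w p • p.2) := by
      ext p; simp; ring
    have hval := (integral_glue b hw h0 h1 hXm (F := fun q : (Fin d → ℝ) × (Fin d → ℝ) =>
        B q.1 q.2) B.continuous₂.stronglyMeasurable
      (by rw [e1]; exact IXy.sub (IXwy.const_mul ε)) (by rw [e2]; exact Ibwy.const_mul ε)).2
    rw [e1, e2, integral_const_mul, ContinuousLinearMap.integral_comp_comm _ hwyi, ← hb,
      integral_sub IXy (IXwy.const_mul ε), integral_const_mul,
      integral_pullout hm B hXs IXy hy hmart, integral_pullout hm B hXs IXwy hwyi ae_eq_rfl,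
      ← integral_const_mul, ← integral_sub IXx (IXg.const_mul ε)] at hval
    have hlow : ∫ p, (B p.1 p.1 + ε * (f p * B p.1 p.1) - ε * (2 * B p.1 (g p)) -
        ε ^ 2 * (4 * ‖B‖ * C ^ 2 * (1 + ‖p.1‖ ^ 2))) ∂γ ≤
        ∫ p, (B (X p) p.1 - ε * B (X p) (g p)) ∂γ := by
      refine integral_mono_ae (((Ixx.add (Ixfx.const_mul ε)).sub
        ((Ixg.const_mul 2).const_mul ε)).sub (IR.const_mul _)) (IXx.sub (IXg.const_mul ε)) ?_
      filter_upwards [hXe, hfC, hgC] with p hp hq hr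
      have := expansion_bound B hB hq hr hε.le hεC hp
      simpa only [map_sub, map_smul, smul_eq_mul] using this
    have a1 : Integrable (fun p => B p.1 p.1 + ε * (f p * B p.1 p.1)) γ :=
      Ixx.add (Ixfx.const_mul ε)
    have a2 : Integrable (fun p => ε * (2 * B p.1 (g p))) γ := (Ixg.const_mul 2).const_mul ε
    have a3 : Integrable (fun p => B p.1 p.1 + ε * (f p * B p.1 p.1) - ε * (2 * B p.1 (g p))) γ :=
      a1.sub a2
    rw [integral_sub a3 (IR.const_mul _), integral_sub a1 a2,
      integral_add Ixx (Ixfx.const_mul ε), integral_const_mul, integral_const_mul,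
      integral_const_mul, integral_const_mul, ← Exf, ← Exg, ← Exx] at hlow
    simp only [primalVal, ← hBS] at hle
    have hval' : ∫ q, B q.1 q.2 ∂glue γ w ε X b =
      ∫ p, (B (X p) p.1 - ε * B (X p) (g p)) ∂γ + ε * B b b := hval
    rw [hval'] at hle
    have : ε * (L + B b b) ≤ ε * (ε * R) := by
      rw [hL, hR]; nlinarith
    exact le_of_mul_le_mul_left this hε
  have hlim : L + B b b ≤ 0 := by
    by_contra! hpos
    have hR0 : 0 ≤ R := integral_nonneg fun p => by positivity
    set δ := L + B b b
    have hden : 0 < 2 * (C + R + 1) := by positivity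
    -- `ε` is chosen with `ε C ≤ 1 / 2` and `ε R < δ`
    have h3 := step (min 1 δ / (2 * (C + R + 1))) (by positivity) (by
      rw [div_mul_eq_mul_div, div_le_iff₀ hden]
      nlinarith [mul_le_mul_of_nonneg_right (min_le_left 1 δ) hC0])
    rw [div_mul_eq_mul_div, le_div_iff₀ hden] at h3
    nlinarith [mul_le_mul_of_nonneg_right (min_le_right 1 δ) hR0, mul_nonneg hpos.le hC0,
      mul_nonneg hpos.le hR0]
  have hfin : ∫ p, w p • (Sb S p.1 p.2 - Sb S p.1 p.1 / 2) ∂γ = -(1 / 2) * L := by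
    have : (fun p : (Fin d → ℝ) × (Fin d → ℝ) => w p • (Sb S p.1 p.2 - Sb S p.1 p.1 / 2)) =
        fun p => w p * B p.1 p.2 - (1 / 2) * (w p * B p.1 p.1) := by
      ext p; simp only [hBS, smul_eq_mul]; ring
    rw [this, integral_sub Ixwy (Ixwx.const_mul _), integral_const_mul, hL]
    ring
  rw [hfin, ← hBS]
  linarith

/-! ### From bounded densities to general measures -/

/-- A point `p = (x, y)` mapped to the pair of quantities whose integrals enter the first-order
condition. -/
def phi {d : ℕ} (S : Matrix (Fin d) (Fin d) ℝ) (p : (Fin d → ℝ) × (Fin d → ℝ)) :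
    ℝ × (Fin d → ℝ) :=
  (Sb S p.1 p.2 - Sb S p.1 p.1 / 2, p.2)

lemma phi_continuous {d : ℕ} (S : Matrix (Fin d) (Fin d) ℝ) : Continuous (phi S) := by
  have hB := (bil S).continuous₂
  have h1 : Continuous fun p : (Fin d → ℝ) × (Fin d → ℝ) => Sb S p.1 p.2 := by
    simp only [← bil_apply]
    exact hB
  have h2 : Continuous fun p : (Fin d → ℝ) × (Fin d → ℝ) => Sb S p.1 p.1 := by
    simp only [← bil_apply]
    exact hB.comp (continuous_fst.prodMk continuous_fst)
  exact (h1.sub (h2.div_const 2)).prodMk continuous_snd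

lemma phi_integrable {d : ℕ} (S : Matrix (Fin d) (Fin d) ℝ)
    {γ : Measure ((Fin d → ℝ) × (Fin d → ℝ))} [IsProbabilityMeasure γ]
    (h2 : Integrable (fun p => ‖p.1‖ ^ 2 + ‖p.2‖ ^ 2) γ) : Integrable (phi S) γ := by
  refine integrable_of_quadratic h2 (phi_continuous S).aestronglyMeasurable
    (2 * ‖bil S‖ + 1) (ae_of_all _ fun p => ?_)
  have h1 := (bil S).le_opNorm₂ p.1 p.2
  have h2 := (bil S).le_opNorm₂ p.1 p.1
  have h0 := norm_nonneg (bil S)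
  have hq : ‖bil S p.1 p.2 - bil S p.1 p.1 / 2‖ ≤
      2 * ‖bil S‖ * (‖p.1‖ ^ 2 + ‖p.2‖ ^ 2) := by
    refine (norm_sub_le _ _).trans ?_
    rw [norm_div, Real.norm_ofNat]
    nlinarith [mul_nonneg h0 (sq_nonneg (‖p.1‖ - ‖p.2‖)), mul_nonneg h0 (sq_nonneg ‖p.1‖),
      mul_nonneg h0 (sq_nonneg ‖p.2‖)]
  rw [phi, ← bil_apply, ← bil_apply, Prod.norm_def]
  refine max_le (hq.trans ?_) ?_
  · nlinarith [sq_nonneg ‖p.1‖, sq_nonneg ‖p.2‖]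
  · nlinarith [sq_nonneg ‖p.1‖, sq_nonneg (‖p.2‖ - 1),
      mul_nonneg h0 (sq_nonneg ‖p.1‖), mul_nonneg h0 (sq_nonneg ‖p.2‖)]

/-- The integrals `∫ Φ dη`, `Φ = phi S`, over the probability measures `η = w γ` with `w` and `w y`
bounded. -/
def densityMeans {d : ℕ} (S : Matrix (Fin d) (Fin d) ℝ)
    (γ : Measure ((Fin d → ℝ) × (Fin d → ℝ))) : Set (ℝ × (Fin d → ℝ)) :=
  {v | ∃ (w : (Fin d → ℝ) × (Fin d → ℝ) → ℝ) (C : ℝ), Measurable w ∧ (∀ p, 0 ≤ w p) ∧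
    (∀ p, w p ≤ C) ∧ (∀ p, ‖w p • p.2‖ ≤ C) ∧ ∫ p, w p ∂γ = 1 ∧ ∫ p, w p • phi S p ∂γ = v}

lemma densityMeans_convex {d : ℕ} (S : Matrix (Fin d) (Fin d) ℝ)
    {γ : Measure ((Fin d → ℝ) × (Fin d → ℝ))} [IsProbabilityMeasure γ]
    (h2 : Integrable (fun p => ‖p.1‖ ^ 2 + ‖p.2‖ ^ 2) γ) : Convex ℝ (densityMeans S γ) := by
  rintro _ ⟨w, C, hw, hw0, hwC, hwy, hw1, rfl⟩ _ ⟨w', C', hw', hw0', hwC', hwy', hw1', rfl⟩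
    a b ha hb hab
  have bd : ∀ {w : (Fin d → ℝ) × (Fin d → ℝ) → ℝ} {C : ℝ}, (∀ p, 0 ≤ w p) → (∀ p, w p ≤ C) →
      ∀ p, ‖w p‖ ≤ C := fun h h' p => by rw [Real.norm_of_nonneg (h p)]; exact h' p
  have i1 : Integrable w γ :=
    Integrable.of_bound hw.aestronglyMeasurable C (ae_of_all _ (bd hw0 hwC))
  have i1' : Integrable w' γ :=
    Integrable.of_bound hw'.aestronglyMeasurable C' (ae_of_all _ (bd hw0' hwC'))
  have i2 : Integrable (fun p => w p • phi S p) γ :=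
    (phi_integrable S h2).bdd_smul C hw.aestronglyMeasurable (ae_of_all _ (bd hw0 hwC))
  have i2' : Integrable (fun p => w' p • phi S p) γ :=
    (phi_integrable S h2).bdd_smul C' hw'.aestronglyMeasurable (ae_of_all _ (bd hw0' hwC'))
  refine ⟨fun p => a * w p + b * w' p, a * C + b * C', by fun_prop,
    fun p => add_nonneg (mul_nonneg ha (hw0 p)) (mul_nonneg hb (hw0' p)),
    fun p => add_le_add (mul_le_mul_of_nonneg_left (hwC p) ha)
      (mul_le_mul_of_nonneg_left (hwC' p) hb), fun p => ?_, ?_, ?_⟩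
  · rw [add_smul, mul_smul, mul_smul]
    refine (norm_add_le _ _).trans ?_
    rw [norm_smul, norm_smul b, Real.norm_of_nonneg ha, Real.norm_of_nonneg hb]
    exact add_le_add (mul_le_mul_of_nonneg_left (hwy p) ha)
      (mul_le_mul_of_nonneg_left (hwy' p) hb)
  · rw [integral_add (i1.const_mul a) (i1'.const_mul b), integral_const_mul, integral_const_mul,
      hw1, hw1']
    linarith
  · have j2 : Integrable (fun p => a • (w p • phi S p)) γ := i2.smul a
    have j2' : Integrable (fun p => b • (w' p • phi S p)) γ := i2'.smul b
    rw [← integral_smul, ← integral_smul, ← integral_add j2 j2']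
    refine integral_congr_ae (ae_of_all _ fun p => ?_)
    simp only [add_smul, mul_smul]

/-- At a point `z` of the support, `Φ(z)` is the limit of the averages of `Φ` over small balls
around `z`, and normalized restrictions of `γ` to such balls have densities as in
`densityMeans`. -/
lemma phi_mem_closure {d : ℕ} (S : Matrix (Fin d) (Fin d) ℝ)
    {γ : Measure ((Fin d → ℝ) × (Fin d → ℝ))} [IsProbabilityMeasure γ]
    (h2 : Integrable (fun p => ‖p.1‖ ^ 2 + ‖p.2‖ ^ 2) γ)
    {z : (Fin d → ℝ) × (Fin d → ℝ)} (hz : z ∈ msupp γ) :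
    phi S z ∈ closure (densityMeans S γ) := by
  rw [Metric.mem_closure_iff]
  intro ε hε
  obtain ⟨δ, hδ, hδε⟩ := Metric.continuous_iff.1 (phi_continuous S) z (ε / 2) (by positivity)
  set r := min δ 1
  have hr : 0 < r := lt_min hδ one_pos
  set U := Metric.ball z r
  have hU : MeasurableSet U := Metric.isOpen_ball.measurableSet
  have hU0 : γ U ≠ 0 := hz U (Metric.ball_mem_nhds z hr)
  have hUr : 0 < γ.real U := ENNReal.toReal_pos hU0 (measure_ne_top _ _)
  have hmem : ⨍ p in U, phi S p ∂γ ∈ Metric.closedBall (phi S z) (ε / 2) := by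
    refine (convex_closedBall _ _).set_average_mem Metric.isClosed_closedBall hU0
      (measure_ne_top _ _) ?_ (phi_integrable S h2).integrableOn
    filter_upwards [ae_restrict_mem hU] with p hp
    exact (hδε p (lt_of_lt_of_le hp (min_le_left _ _))).le
  refine ⟨⨍ p in U, phi S p ∂γ, ?_, ?_⟩
  · have hw : ∀ p, U.indicator (fun _ => (γ.real U)⁻¹) p ≤ (γ.real U)⁻¹ := fun p =>
      Set.indicator_le_self' (fun _ _ => by positivity) p
    have hw0 : ∀ p, 0 ≤ U.indicator (fun _ => (γ.real U)⁻¹) p := fun p =>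
      Set.indicator_nonneg (fun _ _ => by positivity) p
    refine ⟨U.indicator fun _ => (γ.real U)⁻¹, (γ.real U)⁻¹ * (1 + ‖z‖),
      measurable_const.indicator hU, hw0, fun p => (hw p).trans ?_, fun p => ?_, ?_, ?_⟩
    · exact le_mul_of_one_le_right (by positivity) (by linarith [norm_nonneg z])
    · by_cases hp : p ∈ U
      · rw [Set.indicator_of_mem hp, norm_smul, Real.norm_of_nonneg (by positivity)]
        have e1 : ‖p.2‖ ≤ ‖p‖ := norm_snd_le p
        have e2 : ‖p - z‖ < 1 := by
          rw [← dist_eq_norm]; exact lt_of_lt_of_le hp (min_le_right _ _)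
        have e3 : ‖p‖ ≤ ‖p - z‖ + ‖z‖ := by simpa using norm_add_le (p - z) z
        gcongr
        linarith
      · rw [Set.indicator_of_notMem hp]; simp; positivity
    · rw [integral_indicator_const _ hU, smul_eq_mul, mul_inv_cancel₀ hUr.ne']
    · rw [setAverage_eq, ← integral_smul, ← integral_indicator hU]
      refine integral_congr_ae (ae_of_all _ fun p => ?_)
      by_cases hp : p ∈ U <;> simp [hp]
  · rw [dist_comm]
    exact (Metric.mem_closedBall.1 hmem).trans_lt (by linarith)

lemma ae_mem_msupp {α : Type*} [TopologicalSpace α] [SecondCountableTopology α]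
    [MeasurableSpace α] (μ : Measure α) : ∀ᵐ x ∂μ, x ∈ msupp μ := by
  refine measure_null_of_locally_null _ fun x hx => ?_
  have : ∃ U ∈ nhds x, μ U = 0 := by simpa [msupp] using hx
  obtain ⟨U, hU, h0⟩ := this
  exact ⟨U, mem_nhdsWithin_of_mem_nhds hU, h0⟩

/-- Lemma 3, first-order condition: if `γ` is an optimal plan for the
primal problem, then for every Borel probability measure `η` on `ℝ^{2d}` with finite
second moments and support contained in the support of `γ`,
`∫ (S(x,y) - ½S(x,x)) dη ≥ ½ S(b,b)` where `b = ∫ y dη`. -/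
theorem first_order_condition
    (d m : ℕ) (S : Matrix (Fin d) (Fin d) ℝ) (hS : S.IsHermitian)
    (hrank : IsUnit S.det)
    (hm : Nat.card {i : Fin d // 0 < hS.eigenvalues i} = m)
    (ν : Measure (Fin d → ℝ)) [IsProbabilityMeasure ν]
    (hν : Integrable (fun y => ‖y‖ ^ 2) ν)
    (γ : Measure ((Fin d → ℝ) × (Fin d → ℝ))) (hγ : PrimalOpt S ν γ)
    (η : Measure ((Fin d → ℝ) × (Fin d → ℝ))) [IsProbabilityMeasure η]
    (hη2 : Integrable (fun p => ‖p.1‖ ^ 2 + ‖p.2‖ ^ 2) η)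
    (hsupp : msupp η ⊆ msupp γ) :
    (1 / 2) * Sb S (∫ p, p.2 ∂η) (∫ p, p.2 ∂η) ≤
      ∫ p, (Sb S p.1 p.2 - Sb S p.1 p.1 / 2) ∂η := by
  obtain ⟨B, hB⟩ : ∃ B : (Fin d → ℝ) →L[ℝ] (Fin d → ℝ) →L[ℝ] ℝ, ∀ x y, B x y = Sb S x y :=
    ⟨bil S, bil_apply S⟩
  have hP : IsProbabilityMeasure γ := hγ.1.1
  have h2 := hγ.1.2.2.1
  have hq := phi_integrable S hη2
  have hmem : ∫ p, phi S p ∂η ∈ closure (densityMeans S γ) := by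
    refine (densityMeans_convex S h2).closure.integral_mem isClosed_closure ?_ hq
    filter_upwards [ae_mem_msupp η] with p hp
    exact phi_mem_closure S h2 (hsupp hp)
  have hcl : IsClosed {v : ℝ × (Fin d → ℝ) | (1 / 2) * B v.2 v.2 ≤ v.1} :=
    isClosed_le (continuous_const.mul
      (B.continuous₂.comp (continuous_snd.prodMk continuous_snd))) continuous_fst
  have hsub : densityMeans S γ ⊆ {v : ℝ × (Fin d → ℝ) | (1 / 2) * B v.2 v.2 ≤ v.1} := by
    rintro _ ⟨w, C, hw, hw0, hwC, hwy, hw1, rfl⟩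
    have hi : Integrable (fun p => w p • phi S p) γ :=
      (phi_integrable S h2).bdd_smul C hw.aestronglyMeasurable
        (ae_of_all _ fun p => by rw [Real.norm_of_nonneg (hw0 p)]; exact hwC p)
    rw [mem_ofPred_eq, hB, fst_integral hi, snd_integral hi]
    exact variation hS hγ hw hw0 hwC hwy hw1
  have hfinal := closure_minimal hsub hcl hmem
  rw [mem_ofPred_eq, hB, fst_integral hq, snd_integral hq] at hfinal
  exact hfinal

end
end

section
/- Let C be a nonempty closed convex set in ℝ^d and μ a Borel probability measure on ℝ^d with finite first moment whose support is contained in C, and set v := ∫ x dμ. Then v ∈ C and the support of μ is contained in B_C(v), where B_C(v) := {y ∈ C : v + ε(v−y) ∈ C for some ε > 0}. -/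
/-!
Let `K` be the closed convex hull of `supp μ`, so that `K ⊆ C` and the barycenter `v` lies in `K`.
If a linear form `f` satisfies `f v ≤ f x` for all `x ∈ K`, then `x ↦ f x - f v` is nonnegative
almost everywhere with integral zero, hence vanishes almost everywhere; the hyperplane
`{f = f v}` is closed, so it contains `supp μ` and therefore `K`. Thus no hyperplane through `v`
properly supports `K`, which in finite dimension means that `v` is in the relative interior of `K`
(`exists_neg_smul_mem_of_forall_nonneg`). Every segment from a point `y ∈ K` to `v` can then be
prolonged beyond `v` inside `K`.
-/

open MeasureTheory Filter Set Matrix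

noncomputable section

/-- A convex set containing the origin and not properly supported there by any hyperplane
has the origin in its relative interior: segments ending at `0` can be prolonged. -/
lemma exists_neg_smul_mem_of_forall_nonneg {E : Type*} [NormedAddCommGroup E] [NormedSpace ℝ E]
    [FiniteDimensional ℝ E] {K : Set E} (hK : Convex ℝ K) (h0 : (0 : E) ∈ K)
    (hf : ∀ f : E →ₗ[ℝ] ℝ, (∀ x ∈ K, 0 ≤ f x) → ∀ x ∈ K, f x = 0) {y : E} (hy : y ∈ K) :
    ∃ ε : ℝ, 0 < ε ∧ -(ε • y) ∈ K := by
  -- Inside its linear span, `K` has nonempty interior.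
  let V := Submodule.span ℝ K
  let K' : Set V := (↑) ⁻¹' K
  have hK' : Convex ℝ K' := hK.linear_preimage V.subtype
  have h0' : (0 : V) ∈ K' := h0
  have hspan : Submodule.span ℝ K' = ⊤ := Submodule.span_span_coe_preimage
  have hint : (interior K').Nonempty := by
    rw [hK'.interior_nonempty_iff_affineSpan_eq_top,
      AffineSubspace.affineSpan_eq_top_iff_vectorSpan_eq_top_of_nonempty ℝ V V ⟨0, h0'⟩,
      eq_top_iff, ← hspan, Submodule.span_le]
    intro x hx
    simpa using vsub_mem_vectorSpan ℝ hx h0'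
  have hmem : (0 : V) ∈ interior K' := by
    by_contra hn
    obtain ⟨g, hg⟩ := geometric_hahn_banach_open_point hK'.interior isOpen_interior hn
    have hle : ∀ x ∈ K', g x ≤ 0 := by
      intro x hx
      have hx' : x ∈ closure (interior K') := by
        rw [hK'.closure_interior_eq_closure_of_nonempty_interior hint]
        exact subset_closure hx
      have hcl : IsClosed {z : V | g z ≤ 0} := isClosed_le g.continuous continuous_const
      refine closure_minimal (fun z hz => ?_) hcl hx'
      simpa using (hg z hz).le
    obtain ⟨f, hfg⟩ := LinearMap.exists_extend (-(g : V →ₗ[ℝ] ℝ))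
    have hfg' : ∀ x : V, f x = -g x := fun x => by
      simpa using LinearMap.congr_fun hfg x
    have hzero := hf f (fun x hx => by
      have hxg := hle ⟨x, Submodule.subset_span hx⟩ hx
      have := hfg' ⟨x, Submodule.subset_span hx⟩
      simp only at this
      linarith)
    obtain ⟨z, hz⟩ := hint
    have h1 := hg z hz
    have h2 := hzero z (show z ∈ K' from interior_subset hz)
    rw [map_zero] at h1
    rw [hfg'] at h2
    linarith
  let y' : V := ⟨y, Submodule.subset_span hy⟩
  have hlim : Tendsto (fun ε : ℝ => -(ε • y')) (nhdsWithin 0 (Ioi 0)) (nhds 0) := by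
    have hc : Continuous (fun ε : ℝ => -(ε • y')) := by fun_prop
    simpa using (hc.tendsto 0).mono_left nhdsWithin_le_nhds
  have hev := hlim.eventually (mem_interior_iff_mem_nhds.mp hmem)
  obtain ⟨ε, hε, hpos⟩ := (hev.and self_mem_nhdsWithin).exists
  exact ⟨ε, hpos, hε⟩

/-- The support of `μ` lies in every hyperplane through the barycenter of `μ` that has `μ`
on one side. -/
lemma eq_of_mem_msupp_of_ae_le {d : ℕ} (μ : Measure (Fin d → ℝ)) [IsProbabilityMeasure μ]
    (hμ1 : Integrable (fun x => x) μ) (f : (Fin d → ℝ) →L[ℝ] ℝ)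
    (hf : ∀ᵐ x ∂μ, f (∫ x, x ∂μ) ≤ f x) {y : Fin d → ℝ} (hy : y ∈ msupp μ) :
    f y = f (∫ x, x ∂μ) := by
  have hfi : Integrable (fun x => f x) μ := f.integrable_comp hμ1
  have hint : ∫ x, (f x - f (∫ x, x ∂μ)) ∂μ = 0 := by
    rw [integral_sub hfi (integrable_const _), f.integral_comp_comm hμ1]
    simp
  have hae : (fun x => f x - f (∫ x, x ∂μ)) =ᵐ[μ] 0 :=
    (integral_eq_zero_iff_of_nonneg_ae (hf.mono fun x hx => sub_nonneg.mpr hx)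
      (hfi.sub (integrable_const _))).mp hint
  by_contra hne
  have hopen : IsOpen {x | f x ≠ f (∫ x, x ∂μ)} := isOpen_ne_fun f.continuous continuous_const
  refine hy _ (hopen.mem_nhds hne) ?_
  exact ae_iff.mp (hae.mono fun x hx => sub_eq_zero.mp hx)

/-- Lemma 7: if `C` is a nonempty closed convex set in `ℝ^d` and `μ` a
Borel probability measure with finite first moment supported in `C`, then the barycenter
`v = ∫ x dμ` belongs to `C` and `supp μ ⊆ B_C(v)`, where
`B_C(v) = {y ∈ C : v + ε(v - y) ∈ C for some ε > 0}`. -/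
theorem barycenter_mem_and_support_subset
    (d : ℕ) (C : Set (Fin d → ℝ)) (hne : C.Nonempty) (hcl : IsClosed C)
    (hconv : Convex ℝ C)
    (μ : Measure (Fin d → ℝ)) [IsProbabilityMeasure μ]
    (hμ1 : Integrable (fun x => x) μ)
    (hsupp : msupp μ ⊆ C) :
    (∫ x, x ∂μ) ∈ C ∧
      msupp μ ⊆ {y ∈ C | ∃ ε : ℝ, 0 < ε ∧
        (∫ x, x ∂μ) + ε • ((∫ x, x ∂μ) - y) ∈ C} := by
  have hms : msupp μ = μ.support := by
    ext x
    simp [msupp, Measure.mem_support_iff_forall, pos_iff_ne_zero]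
  have hae : ∀ᵐ x ∂μ, x ∈ msupp μ := by
    rw [hms]
    exact Measure.support_mem_ae
  set v := ∫ x, x ∂μ with hv
  let K := closure (convexHull ℝ (msupp μ))
  have hKconv : Convex ℝ K := (convex_convexHull ℝ _).closure
  have hsub : msupp μ ⊆ K := (subset_convexHull ℝ _).trans subset_closure
  have hKC : K ⊆ C := closure_minimal (convexHull_min hsupp hconv) hcl
  have hvK : v ∈ K :=
    hKconv.integral_mem isClosed_closure (hae.mono fun x hx => hsub hx) hμ1
  refine ⟨hKC hvK, fun y hy => ⟨hsupp hy, ?_⟩⟩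
  obtain ⟨ε, hε, hmem⟩ := exists_neg_smul_mem_of_forall_nonneg (K := (fun x => v + x) ⁻¹' K)
    (hKconv.translate_preimage_right v) (by simpa using hvK) (y := y - v)
    (fun f hf => by
      let F : (Fin d → ℝ) →L[ℝ] ℝ := LinearMap.toContinuousLinearMap f
      have hle : ∀ᵐ x ∂μ, F v ≤ F x := hae.mono fun x hx => by
        have := hf (x - v) (by simpa using hsub hx)
        rw [map_sub] at this
        exact sub_nonneg.mp this
      have hEq : K ⊆ {x | F x = F v} := by
        refine closure_minimal (convexHull_min
          (fun z hz => eq_of_mem_msupp_of_ae_le μ hμ1 F hle hz) ?_)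
          (isClosed_eq F.continuous continuous_const)
        exact convex_hyperplane f.isLinear (F v)
      intro x hx
      have h1 : f (v + x) = f v := hEq hx
      rw [map_add] at h1
      linarith)
    (by simpa using hsub hy)
  refine ⟨ε, hε, hKC ?_⟩
  have he : v + ε • (v - y) = v + -(ε • (y - v)) := by
    rw [← smul_neg, neg_sub]
  rw [he]
  exact hmem

end
end
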